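/- On the event E, assume the learnable-only regime p_un = 0 (i.e., S_U = ∅) and Condition (H). Then for every iteration t ≤ T the noise coefficients satisfy max over i ∈ [N], j ≠ s(X_i), r ∈ [m] of ρ_{i,j,r}^{(t)} ≤ 200·exp(2C_0³)·log(16NmP/δ)·σ_0σ_n²d/(N(α−ε)³), and consequently every noise response remains at the initialization scale: |⟨w_r^{(t)}, x_{i,j}⟩| ≤ 3σ_0σ_n√(d·log(16NmP/δ)) for all i ∈ [N], j ≠ s(X_i), r ∈ [m], t ≤ T. -/

import Mathlib

open Finset MeasureTheory ProbabilityTheory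
open scoped ENNReal NNReal

noncomputable section

namespace AD

/-- Cubic ReLU activation. -/
def phi (z : ℝ) : ℝ := (max 0 z) ^ 3

/-- Negative sigmoid `ψ(z) = 1/(1+e^z)`. -/
def psi (z : ℝ) : ℝ := 1 / (1 + Real.exp z)

/-- Logistic loss `ℓ(z) = log(1+e^{-z})`. -/
def lloss (z : ℝ) : ℝ := Real.log (1 + Real.exp (-z))

/-- Logistic sigmoid `σ(z) = 1/(1+e^{-z})`. -/
def sigm (z : ℝ) : ℝ := 1 / (1 + Real.exp (-z))

/-- Euclidean inner product on `Fin d → ℝ`. -/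
def dot {d : ℕ} (a b : Fin d → ℝ) : ℝ := ∑ k, a k * b k

/-- Squared Euclidean norm. -/
def sqnorm {d : ℕ} (a : Fin d → ℝ) : ℝ := dot a a

/-- First standard basis vector `e₁` (the learnable feature `u`). -/
def e1 (d : ℕ) (hd : 0 < d) : Fin d → ℝ := fun k => if k = (⟨0, hd⟩ : Fin d) then 1 else 0

/-- Last standard basis vector `e_d` (the unlearnable feature `v`). -/
def eLast (d : ℕ) (_hd : 0 < d) : Fin d → ℝ := fun k => if (k : ℕ) = d - 1 then 1 else 0

/-- The two-layer student network
`f_W(X) = ∑_r ∑_p [φ(⟨w_r,x_p⟩) − φ(−⟨w_r,x_p⟩)]`. -/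
def netOut {m P d : ℕ} (w : Fin m → Fin d → ℝ) (X : Fin P → Fin d → ℝ) : ℝ :=
  ∑ r, ∑ p, (phi (dot (w r) (X p)) - phi (-(dot (w r) (X p))))

/-- The concentration event `E` of the paper, i.e. properties (P1)–(P8), stated for
training patches `x`, initialization `w0`, labels `y` and signal-patch indices `sig`. -/
def EventEOn (N m P d : ℕ) (hd : 0 < d) (sigman sigma0 delta : ℝ)
    (y : Fin N → ℝ) (sig : Fin N → Fin P)
    (x : Fin N → Fin P → Fin d → ℝ) (w0 : Fin m → Fin d → ℝ) : Prop :=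
  -- (P1) noise-patch norms
  (∀ i j, j ≠ sig i →
      sigman ^ 2 * d / 2 ≤ sqnorm (x i j) ∧ sqnorm (x i j) ≤ 3 * sigman ^ 2 * d / 2) ∧
  -- (P2) pairwise noise inner products
  (∀ i k j q, j ≠ sig i → q ≠ sig k → ((i, j) : Fin N × Fin P) ≠ (k, q) →
      |dot (x i j) (x k q)| ≤
        2 * sigman ^ 2 * Real.sqrt ((d : ℝ) * Real.log ((16 : ℝ) * N ^ 2 * P ^ 2 / delta))) ∧
  -- (P3) sup-norm of noise patches
  (∀ i j, j ≠ sig i → ∀ kk : Fin d,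
      |x i j kk| ≤ sigman * Real.sqrt (2 * Real.log ((16 : ℝ) * d * N * P / delta))) ∧
  -- (P4) initialization norms
  (∀ r, Real.sqrt (sqnorm (w0 r)) ≤ 2 * sigma0 * Real.sqrt d) ∧
  -- (P5) initialization signal correlation
  (∀ r, |dot (w0 r) (e1 d hd)| ≤ sigma0 * Real.sqrt (2 * Real.log ((16 : ℝ) * m / delta))) ∧
  -- (P6) initialization noise correlations
  (∀ r i j, j ≠ sig i →
      |dot (w0 r) (x i j)| ≤
        2 * sigma0 * sigman * Real.sqrt ((d : ℝ) * Real.log ((16 : ℝ) * N * m * P / delta))) ∧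
  -- (P7) maximal initial signal alignment
  (∃ r, sigma0 / 2 ≤ dot (w0 r) (e1 d hd)) ∧
  -- (P8) maximal initial noise alignment
  (∀ i j, j ≠ sig i → ∃ r, sigma0 * sigman * Real.sqrt d / 4 ≤ y i * dot (w0 r) (x i j))
structure Setting where
  N : ℕ
  m : ℕ
  P : ℕ
  d : ℕ
  T : ℕ
  hN : 0 < N
  hm : 0 < m
  hP : 0 < P
  hd : 0 < d
  alpha : ℝ
  sigman : ℝ
  sigma0 : ℝ
  eta : ℝ
  eps : ℝ
  delta : ℝ
  halpha : 0 < alpha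
  hsigman : 0 < sigman
  hsigma0 : 0 < sigma0
  heta : 0 < eta
  heps : 0 < eps
  hepsalpha : eps < alpha
  hdelta0 : 0 < delta
  hdelta1 : delta < 1
  /-- labels -/
  y : Fin N → ℝ
  hy : ∀ i, y i = 1 ∨ y i = -1
  /-- signal patch index -/
  sig : Fin N → Fin P
  /-- learnable samples -/
  SL : Finset (Fin N)
  /-- unlearnable samples -/
  SU : Finset (Fin N)
  hunion : SL ∪ SU = Finset.univ
  hdisj : Disjoint SL SU
  /-- training patches -/
  x : Fin N → Fin P → Fin d → ℝ
  hsigL : ∀ i ∈ SL, x i (sig i) = (alpha * y i) • e1 d hd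
  hsigU : ∀ i ∈ SU, x i (sig i) = (alpha * y i) • eLast d hd
  hnoiseU : ∀ i j, j ≠ sig i → dot (x i j) (e1 d hd) = 0
  hnoiseV : ∀ i j, j ≠ sig i → dot (x i j) (eLast d hd) = 0
  /-- weight trajectory -/
  w : ℕ → Fin m → Fin d → ℝ
  hwperp : ∀ t r, dot (w t r) (eLast d hd) = 0
  /-- adversarial training examples at each iteration -/
  xadv : ℕ → Fin N → Fin P → Fin d → ℝ
  hadvnoise : ∀ t i j, j ≠ sig i → xadv t i j = x i j
  hadvspan : ∀ t i, ∃ c : ℝ, xadv t i (sig i) - x i (sig i) = c • x i (sig i)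
  hadvlinf : ∀ t i p k, |xadv t i p k - x i p k| ≤ eps
  hadvlearn : ∀ t : ℕ, ∀ i ∈ SL,
    alpha - eps ≤ y i * dot (xadv t i (sig i)) (e1 d hd) ∧
      y i * dot (xadv t i (sig i)) (e1 d hd) ≤ alpha

namespace Setting

variable (S : Setting)

/-- Adversarial margin `y_i f_{W^{(t)}}(X̃_i^{(t)})`. -/
def marg (t : ℕ) (i : Fin S.N) : ℝ := S.y i * netOut (S.w t) (S.xadv t i)

/-- Signal coordinate `w_{r,1}^{(t)}`. -/
def wsig (t : ℕ) (r : Fin S.m) : ℝ := S.w t r ⟨0, S.hd⟩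

/-- Unlearnable fraction `p_un = |S_U|/N`. -/
def pun : ℝ := (S.SU.card : ℝ) / S.N

/-- The adversarial-training gradient-descent dynamics. -/
def ATDyn : Prop :=
  ∀ t r, S.w (t + 1) r = S.w t r +
    (3 * S.eta / S.N) •
      ∑ i : Fin S.N, (psi (S.marg t i) * S.y i) •
        ∑ p : Fin S.P, (dot (S.w t r) (S.xadv t i p)) ^ 2 • S.xadv t i p

/-- The signed gradient weight of sample `i` at iteration `t` under adversarial
distillation from teacher logits `fT`. -/
def gAD (fT : Fin S.N → ℝ) (t : ℕ) (i : Fin S.N) : ℝ :=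
  sigm (S.y i * fT i) * psi (S.marg t i) - sigm (-(S.y i * fT i)) * psi (-(S.marg t i))

/-- The adversarial-distillation gradient-descent dynamics. -/
def ADDyn (fT : Fin S.N → ℝ) : Prop :=
  ∀ t r, S.w (t + 1) r = S.w t r +
    (3 * S.eta / S.N) •
      ∑ i : Fin S.N, (S.gAD fT t i * S.y i) •
        ∑ p : Fin S.P, (dot (S.w t r) (S.xadv t i p)) ^ 2 • S.xadv t i p

/-- Noise coefficients `ρ_{i,j,r}^{(t)}` (adversarial training). -/
def rho (i : Fin S.N) (j : Fin S.P) (r : Fin S.m) : ℕ → ℝ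
  | 0 => 0
  | t + 1 => rho i j r t + (3 * S.eta / S.N) * psi (S.marg t i) * (dot (S.w t r) (S.x i j)) ^ 2

/-- Noise coefficients under adversarial distillation. -/
def rhoAD (fT : Fin S.N → ℝ) (i : Fin S.N) (j : Fin S.P) (r : Fin S.m) : ℕ → ℝ
  | 0 => 0
  | t + 1 => rhoAD fT i j r t + (3 * S.eta / S.N) * S.gAD fT t i * (dot (S.w t r) (S.x i j)) ^ 2

/-- The event `E` for a setting. -/
def EventE : Prop :=
  EventEOn S.N S.m S.P S.d S.hd S.sigman S.sigma0 S.delta S.y S.sig S.x (S.w 0)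

/-- Condition (H): the parameter requirements of Condition 4.1 of the paper
(without the unlearnable-fraction regime item, which is imposed separately). -/
def CondH (C : ℝ) : Prop :=
  1 ≤ C ∧
  -- training horizon
  C * S.N / (S.eta * S.sigma0 * S.sigman ^ 3 * ((S.d : ℝ) * Real.sqrt S.d)) ≤ (S.T : ℝ) ∧
  -- dimension
  C * S.m ^ 2 * S.P ^ 2 * S.N ^ 2 *
      (Real.log ((S.T : ℝ) * S.N * S.m * S.P / S.delta)) ^ 4 ≤ (S.d : ℝ) ∧
  -- signal strength
  C * S.sigman * Real.sqrt S.d * Real.log ((S.T : ℝ) * S.N * S.m * S.P / S.delta) /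
      (((S.N : ℝ) * (1 - S.pun)) ^ ((1 : ℝ) / 3)) ≤ S.alpha ∧
  -- initialization scale
  S.sigma0 ≤
    C⁻¹ *
        min (min (1 / ((S.m : ℝ) ^ ((2 : ℝ) / 3) * (S.P : ℝ) ^ ((2 : ℝ) / 3) *
            S.sigman * Real.sqrt S.d))
          (1 / (S.alpha * (S.m : ℝ) ^ ((2 : ℝ) / 3))))
          (1 / (S.sigman * S.m ^ 2 * Real.sqrt S.P * S.d)) /
      Real.log ((S.T : ℝ) * S.d * S.N * S.m * S.P / S.delta) ∧
  -- learning rate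
  S.eta ≤
    C⁻¹ * min (min (1 / (S.alpha ^ 3 * S.sigma0)) (1 / (S.sigman ^ 2 * S.d))) (1 / S.alpha ^ 2) /
      Real.log ((S.T : ℝ) * S.N * S.m * S.P / S.delta) ∧
  -- adversarial budget
  C * S.sigman * S.m * Real.sqrt S.P * Real.log ((S.T : ℝ) * S.d * S.N * S.P / S.delta) ≤ S.eps ∧
  S.eps < C⁻¹ * min S.alpha (1 / (S.m * S.sigma0 * S.d)) ∧
  -- width and number of patches
  C * Real.log ((S.N : ℝ) * S.P / S.delta) ≤ (S.m : ℝ) ∧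
  (S.m : ℝ) ≤ C * Real.log S.d ^ C ∧
  2 ≤ S.P ∧ (S.P : ℝ) ≤ C

/-- The sparse-unlearnable regime of Condition 4.1. -/
def SparseRegime (C : ℝ) : Prop :=
  C / S.N ≤ S.pun ∧ S.pun ≤ C⁻¹ * Real.log S.d / S.N ∧
  C * S.m * S.P * Real.log ((S.T : ℝ) * S.d * S.N * S.m * S.P / S.delta) ≤ (S.N : ℝ)

/-- The noise-stability bound (NS) on learnable samples at iteration `t`. -/
def NS (t : ℕ) : Prop :=
  ∀ r : Fin S.m, ∀ i ∈ S.SL, ∀ j, j ≠ S.sig i →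
    |dot (S.w t r) (S.x i j)| ≤
      3 * S.sigma0 * S.sigman *
          Real.sqrt ((S.d : ℝ) * Real.log ((16 : ℝ) * S.N * S.m * S.P / S.delta)) +
        21 * S.pun * S.N * S.P * Real.log S.T ^ ((1 : ℝ) / 3) / Real.sqrt S.d *
          Real.sqrt (Real.log ((16 : ℝ) * S.N ^ 2 * S.P ^ 2 / S.delta))

/-- The signal-learning hitting time `T₀`. -/
def T0 (C0 : ℝ) : ℕ :=
  sInf {t : ℕ | ∃ r, C0 / (S.alpha * (S.m : ℝ) ^ ((1 : ℝ) / 3)) < S.wsig t r}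

/-- Maximum of the noise coefficients over unlearnable noise patches. -/
def rhoMaxSU (t : ℕ) : ℝ :=
  sSup {z : ℝ | ∃ r : Fin S.m, ∃ k ∈ S.SU, ∃ q, q ≠ S.sig k ∧ z = S.rho k q r t}

/-- Shifted noise coefficients `ρ̂_{i,j,r}^{(t)}`. -/
def rhoHat (i : Fin S.N) (j : Fin S.P) (r : Fin S.m) (t : ℕ) : ℝ :=
  S.rho i j r t + S.y i * dot (S.w 0 r) (S.x i j) / sqnorm (S.x i j)

/-- Maximum shifted noise coefficient over unlearnable noise patches. -/
def rhoHatMax (t : ℕ) : ℝ :=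
  sSup {z : ℝ | ∃ r : Fin S.m, ∃ k ∈ S.SU, ∃ q, q ≠ S.sig k ∧ z = S.rhoHat k q r t}

/-- The noise-memorization hitting time `T₁`. -/
def T1 (C1 : ℝ) : ℕ :=
  sInf {t : ℕ | C1 / (((S.m : ℝ) * S.P) ^ ((1 : ℝ) / 3) * S.sigman ^ 2 * S.d) < S.rhoHatMax t}

/-- The Good-Teacher horizon `T_max`. -/
def Tmax : ℝ :=
  S.N / (1000 * S.eta * S.m * S.P * S.sigma0 ^ 4 * S.sigman ^ 6 * (S.d : ℝ) ^ 3 *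
    Real.log ((16 : ℝ) * S.N * S.m * S.P / S.delta) ^ 2)

end Setting

/-!
While all noise responses stay at the initialization scale, every adversarial margin equals its
signal part up to `O(1)`, and each signal coordinate follows a recursion `u ↦ u + s u²` with a
step `s` common to all neurons. Since `1 / u` then decreases by at least `s / 2`, the steps sum to
at most `2 / u`. Until some neuron reaches `N σ₀`, the budget is too small to separate the margins
of different samples by more than a constant, because `(α - ε) u = O(log t)`; so each sample
carries at most a constant multiple of the average loss derivative. Afterwards the total of all
steps is at most `2 / (N σ₀)`. Either way, the loss derivatives of one sample, weighted by the
step size, sum to `O(1 / (N σ₀ (α - ε)³))`, which bounds the noise coefficients. As distinct noise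
patches are nearly orthogonal, such coefficients move the noise responses by less than the
initialization scale, and the induction on the iteration closes.
-/

section Scalar

theorem phi_sub_phi_neg (z : ℝ) : phi z - phi (-z) = z ^ 3 := by
  unfold phi
  rcases le_total 0 z with hz | hz
  · rw [max_eq_right hz, max_eq_left (by linarith)]; ring
  · rw [max_eq_left hz, max_eq_right (by linarith)]; ring

theorem psi_pos (z : ℝ) : 0 < psi z := by
  unfold psi; positivity

theorem psi_le_exp_neg (z : ℝ) : psi z ≤ Real.exp (-z) := by
  unfold psi
  rw [Real.exp_neg, ← one_div]
  exact one_div_le_one_div_of_le (Real.exp_pos z) (by linarith)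

theorem psi_le_exp_mul_psi {z z' c : ℝ} (hc : 0 ≤ c) (h : z' ≤ z + c) :
    psi z ≤ Real.exp c * psi z' := by
  unfold psi
  rw [mul_one_div, div_le_div_iff₀ (by positivity) (by positivity), one_mul]
  have hexp : Real.exp z' ≤ Real.exp c * Real.exp z := by
    rw [← Real.exp_add]; exact Real.exp_le_exp.2 (by linarith)
  linarith [Real.one_le_exp hc]

theorem mul_exp_neg_cube_le_one (b : ℝ) : b * Real.exp (-b ^ 3) ≤ 1 := by
  rcases le_total b 0 with hb | hb
  · exact (mul_nonpos_of_nonpos_of_nonneg hb (Real.exp_pos _).le).trans zero_le_one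
  rw [Real.exp_neg, ← div_eq_mul_inv, div_le_one (Real.exp_pos _)]
  have hcube : b ≤ b ^ 3 + 1 := by
    nlinarith [mul_nonneg hb (sq_nonneg (b - 1)), sq_nonneg (b - 1)]
  exact hcube.trans (Real.add_one_le_exp _)

theorem sq_mul_exp_sub_cube_le_one {b : ℝ} (hb : -1 ≤ b) : b ^ 2 * Real.exp (b - b ^ 3) ≤ 1 := by
  rcases le_total 0 b with h0 | h0
  · have hexp : b ≤ Real.exp (b - 1) := by linarith [Real.add_one_le_exp (b - 1)]
    have hcube : 0 ≤ (b - 1) ^ 2 * (b + 2) := by positivity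
    calc b ^ 2 * Real.exp (b - b ^ 3)
        ≤ Real.exp (b - 1) ^ 2 * Real.exp (b - b ^ 3) := by gcongr
      _ = Real.exp (-((b - 1) ^ 2 * (b + 2))) := by
          rw [← Real.exp_nat_mul, ← Real.exp_add]; congr 1; push_cast; ring
      _ ≤ 1 := Real.exp_le_one_iff.2 (by linarith)
  · have hsq : b ^ 2 ≤ 1 := by nlinarith
    have hexp : Real.exp (b - b ^ 3) ≤ 1 := Real.exp_le_one_iff.2 (by nlinarith)
    exact mul_le_one₀ hsq (Real.exp_pos _).le hexp

theorem pow_three_sub_pow_three_le {x y : ℝ} (hx : 0 ≤ x) (hy : 0 ≤ y) :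
    x ^ 3 - y ^ 3 ≤ 3 * x ^ 2 * (x - y) := by
  have hrest : 0 ≤ (x - y) ^ 2 * (2 * x + y) := by positivity
  linarith

theorem rpow_div_three_pow_three {x : ℝ} (hx : 0 ≤ x) (y : ℝ) : (x ^ (y / 3)) ^ 3 = x ^ y := by
  rw [← Real.rpow_natCast, ← Real.rpow_mul hx]
  norm_num

theorem sqrt_le_of_le_of_one_le {x y : ℝ} (hxy : x ≤ y) (hy : 1 ≤ y) : Real.sqrt x ≤ y :=
  Real.sqrt_le_iff.2 ⟨by linarith, by nlinarith⟩

theorem log_le_mul_log_of_le_pow {x y : ℝ} {k : ℕ} (hx : 0 < x) (h : x ≤ y ^ k) :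
    Real.log x ≤ k * Real.log y := by
  rw [← Real.log_pow]
  exact Real.log_le_log hx h

theorem mul_mul_le_of_le_mul_div {x c M b L : ℝ} (hc : 0 ≤ c) (hb : 0 < b) (hL : 0 < L)
    (hM : M ≤ 1 / b) (h : x ≤ c * M / L) : x * b * L ≤ c := by
  have hx : x ≤ c / (b * L) := by
    calc x ≤ c * M / L := h
      _ ≤ c * (1 / b) / L := by gcongr
      _ = c / (b * L) := by field_simp
  rw [mul_assoc]
  exact (le_div_iff₀ (by positivity)).1 hx

theorem exp_four_le : Real.exp 4 ≤ 55 := by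
  calc Real.exp 4 = Real.exp 1 ^ 4 := by rw [← Real.exp_nat_mul]; norm_num
    _ ≤ 2.7182818286 ^ 4 := by gcongr; exact Real.exp_one_lt_d9.le
    _ ≤ 55 := by norm_num

theorem abs_sum_le_add_card_mul {ι : Type*} {s : Finset ι} {f : ι → ℝ} {a : ι} {V c : ℝ}
    (ha : a ∈ s) (hV : |f a| ≤ V) (hc : 0 ≤ c) (h : ∀ b ∈ s, b ≠ a → |f b| ≤ c) :
    |∑ b ∈ s, f b| ≤ V + #s * c := by
  classical
  have hrest : |∑ b ∈ s.erase a, f b| ≤ #s * c := by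
    calc |∑ b ∈ s.erase a, f b|
        ≤ ∑ _b ∈ s.erase a, c :=
          (abs_sum_le_sum_abs _ _).trans
            (sum_le_sum fun b hb => h b (mem_of_mem_erase hb) (ne_of_mem_erase hb))
      _ = #(s.erase a) * c := by rw [sum_const, nsmul_eq_mul]
      _ ≤ #s * c := by gcongr; exact erase_subset a s
  rw [← add_sum_erase s f ha]
  exact (abs_add_le _ _).trans (add_le_add hV hrest)

end Scalar

section Sequences

-- Telescoping: `1 / u` decreases by `s / (1 + s u) ≥ s / 2` in each step.
theorem sum_step_le_two_div {u s : ℕ → ℝ} {t₀ t : ℕ} (h : t₀ ≤ t) (hs : ∀ τ, 0 ≤ s τ)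
    (hu : ∀ τ, u (τ + 1) = u τ + s τ * u τ ^ 2) (h0 : 0 < u t₀)
    (hsu : ∀ τ < t, s τ * u τ ≤ 1) :
    ∑ τ ∈ Ico t₀ t, s τ ≤ 2 / u t₀ := by
  suffices key : 0 < u t ∧ ∑ τ ∈ Ico t₀ t, s τ ≤ 2 / u t₀ - 2 / u t by
    linarith [key.2, div_pos two_pos key.1]
  induction t, h using Nat.le_induction with
  | base => simp [h0]
  | succ n hn ih =>
    obtain ⟨hpos, hsum⟩ := ih fun τ hτ => hsu τ (by omega)
    have hsn := hs n
    have hfactor : u (n + 1) = u n * (1 + s n * u n) := by rw [hu]; ring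
    have hstep : s n ≤ 2 / u n - 2 / u (n + 1) := by
      have hdiff : 2 / u n - 2 / u (n + 1) = 2 * s n / (1 + s n * u n) := by
        rw [hfactor]; field_simp; ring
      rw [hdiff, le_div_iff₀ (by positivity)]
      nlinarith [hsu n (by omega)]
    rw [sum_Ico_succ_top hn]
    exact ⟨by rw [hfactor]; positivity, by linarith⟩

theorem exp_le_exp_zero_add {b q : ℕ → ℝ} {t : ℕ} (hb : ∀ τ, b (τ + 1) = b τ + q τ)
    (hq0 : ∀ τ, 0 ≤ q τ) (hb1 : ∀ τ, -1 ≤ b τ)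
    (hq : ∀ τ < t, 2 * q τ * Real.exp (b τ + 1) ≤ 1) :
    ∀ τ ≤ t, Real.exp (b τ) ≤ Real.exp (b 0) + τ := by
  intro τ
  induction τ with
  | zero => intro _; simp
  | succ n ih =>
    intro hn
    have hqn := hq n (by omega)
    have hq1 : q n ≤ 1 := by
      nlinarith [hq0 n, Real.one_le_exp (by linarith [hb1 n] : 0 ≤ b n + 1)]
    have hexpq : Real.exp (q n) ≤ 1 + 2 * q n := by
      have habs : |q n| = q n := abs_of_nonneg (hq0 n)
      have hexp := Real.abs_exp_sub_one_le (habs.trans_le hq1)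
      rw [habs] at hexp
      linarith [(abs_le.1 hexp).2]
    have hinc : 2 * q n * Real.exp (b n) ≤ 1 := by
      refine le_trans ?_ hqn
      have := hq0 n
      gcongr
      linarith
    calc Real.exp (b (n + 1)) = Real.exp (b n) * Real.exp (q n) := by rw [hb, Real.exp_add]
      _ ≤ Real.exp (b n) * (1 + 2 * q n) := by gcongr
      _ = Real.exp (b n) + 2 * q n * Real.exp (b n) := by ring
      _ ≤ Real.exp (b 0) + n + 1 := add_le_add (ih (by omega)) hinc
      _ = Real.exp (b 0) + ↑(n + 1) := by push_cast; ring

end Sequences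

section SignalDynamics

variable {ι κ : Type*} [Fintype ι]

/-- The coefficient of `u²` in the signal recursion `u ↦ u + signalRate η a g * u²`: the step size
`η` times the average over the samples of the loss derivative at margin `g i` times the cubed signal
strength `a i`. -/
def signalRate (η : ℝ) (a g : ι → ℝ) : ℝ :=
  η / Fintype.card ι * ∑ i, psi (g i) * a i ^ 3

variable [Fintype κ]

/-- The scalar dynamics followed by the signal coordinates `u τ r` of the neurons `r`, when sample
`i` has signal strength `a τ i ∈ [β, α]` and margin `g τ i`, the margins deviate from their signal
part by at most `1` before time `t`, and the initial signal part of a margin is at least `-1`. -/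
structure SignalDynamics (α β η ν : ℝ) (t : ℕ) (u : ℕ → κ → ℝ) (a g : ℕ → ι → ℝ) : Prop where
  beta_pos : 0 < β
  beta_le : β ≤ α
  eta_nonneg : 0 ≤ η
  eta_mul_le : 2 * Real.exp 3 * η * α ^ 3 ≤ β
  strength_mem : ∀ τ i, a τ i ∈ Set.Icc β α
  step : ∀ τ r, u (τ + 1) r = u τ r + signalRate η (a τ) (g τ) * u τ r ^ 2
  abs_margin_sub_le : ∀ τ < t, ∀ i, |g τ i - a τ i ^ 3 * ∑ r, u τ r ^ 3| ≤ 1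
  init_le : ∀ r, α * |u 0 r| ≤ ν
  card_mul_le : Fintype.card κ * ν ^ 3 ≤ 1

namespace SignalDynamics

variable {α β η ν : ℝ} {t : ℕ} {u : ℕ → κ → ℝ} {a g : ℕ → ι → ℝ}

theorem alpha_pos (D : SignalDynamics α β η ν t u a g) : 0 < α := D.beta_pos.trans_le D.beta_le

theorem strength_pos (D : SignalDynamics α β η ν t u a g) (τ : ℕ) (i : ι) : 0 < a τ i :=
  D.beta_pos.trans_le (D.strength_mem τ i).1

theorem rate_nonneg (D : SignalDynamics α β η ν t u a g) (τ : ℕ) :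
    0 ≤ signalRate η (a τ) (g τ) :=
  mul_nonneg (div_nonneg D.eta_nonneg (Nat.cast_nonneg _)) <| sum_nonneg fun i _ =>
    mul_nonneg (psi_pos _).le (pow_nonneg (D.strength_pos τ i).le 3)

theorem monotone (D : SignalDynamics α β η ν t u a g) (r : κ) : Monotone fun τ => u τ r :=
  monotone_nat_of_le_succ fun τ => by
    rw [D.step]
    exact le_add_of_nonneg_right (mul_nonneg (D.rate_nonneg τ) (sq_nonneg _))

theorem nu_nonneg (D : SignalDynamics α β η ν t u a g) (r : κ) : 0 ≤ ν :=
  (mul_nonneg D.alpha_pos.le (abs_nonneg _)).trans (D.init_le r)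

theorem nu_le_one (D : SignalDynamics α β η ν t u a g) (r : κ) : ν ≤ 1 := by
  have : Nonempty κ := ⟨r⟩
  have hcard : (1 : ℝ) ≤ Fintype.card κ := by exact_mod_cast Fintype.card_pos
  have hν3 : 0 ≤ ν ^ 3 := pow_nonneg (D.nu_nonneg r) 3
  exact (pow_le_one_iff_of_nonneg (D.nu_nonneg r) three_ne_zero).1
    ((le_mul_of_one_le_left hν3 hcard).trans D.card_mul_le)

theorem neg_le_mul (D : SignalDynamics α β η ν t u a g) {c : ℝ} (hc : 0 ≤ c) (hcα : c ≤ α)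
    (τ : ℕ) (r : κ) : -ν ≤ c * u τ r := by
  have hinit : -|u 0 r| ≤ u τ r := (neg_abs_le _).trans (D.monotone r (Nat.zero_le τ))
  calc -ν ≤ -(α * |u 0 r|) := neg_le_neg (D.init_le r)
    _ ≤ -(c * |u 0 r|) := by gcongr
    _ = c * -|u 0 r| := by ring
    _ ≤ c * u τ r := by gcongr

theorem neg_one_le_mul (D : SignalDynamics α β η ν t u a g) (τ : ℕ) (r : κ) : -1 ≤ β * u τ r :=
  (neg_le_neg (D.nu_le_one r)).trans (D.neg_le_mul D.beta_pos.le D.beta_le τ r)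

theorem neg_pow_le_strength_mul_pow (D : SignalDynamics α β η ν t u a g) (τ : ℕ) (i : ι) (r : κ) :
    -ν ^ 3 ≤ (a τ i * u τ r) ^ 3 := by
  rw [← Odd.neg_pow (by decide : Odd 3)]
  exact (Odd.pow_le_pow (by decide)).2
    (D.neg_le_mul (D.strength_pos τ i).le (D.strength_mem τ i).2 τ r)

-- All other neurons together contribute at least `-card κ * ν ^ 3 ≥ -1`.
theorem pow_sub_two_le_margin (D : SignalDynamics α β η ν t u a g) {τ : ℕ} (hτ : τ < t) (i : ι)
    (r : κ) : (β * u τ r) ^ 3 - 2 ≤ g τ i := by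
  have hβ := D.beta_pos
  have hnonneg : ∀ r' ∈ univ, 0 ≤ (a τ i * u τ r') ^ 3 + ν ^ 3 := fun r' _ => by
    linarith [D.neg_pow_le_strength_mul_pow τ i r']
  have hr : (β * u τ r) ^ 3 ≤ (a τ i * u τ r) ^ 3 + ν ^ 3 := by
    rcases le_total 0 (u τ r) with h0 | h0
    · have hν := pow_nonneg (D.nu_nonneg r) 3
      have hmono : (β * u τ r) ^ 3 ≤ (a τ i * u τ r) ^ 3 := by
        have := (D.strength_mem τ i).1
        gcongr
      linarith
    · exact (Odd.pow_nonpos (by decide) (mul_nonpos_of_nonneg_of_nonpos hβ.le h0)).trans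
        (hnonneg r (mem_univ r))
  have hsum : (β * u τ r) ^ 3 ≤ a τ i ^ 3 * ∑ r', u τ r' ^ 3 + Fintype.card κ * ν ^ 3 := by
    calc (β * u τ r) ^ 3 ≤ ∑ r', ((a τ i * u τ r') ^ 3 + ν ^ 3) :=
          hr.trans (single_le_sum hnonneg (mem_univ r))
      _ = a τ i ^ 3 * ∑ r', u τ r' ^ 3 + Fintype.card κ * ν ^ 3 := by
          simp only [sum_add_distrib, mul_pow, ← mul_sum, sum_const, card_univ, nsmul_eq_mul]
  linarith [D.card_mul_le, (abs_le.1 (D.abs_margin_sub_le τ hτ i)).1]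

theorem rate_le (D : SignalDynamics α β η ν t u a g) {τ : ℕ} (hτ : τ < t) (r : κ) :
    signalRate η (a τ) (g τ) ≤ β * Real.exp (-(β * u τ r) ^ 3 - 1) / 2 := by
  have hη := D.eta_nonneg
  have hα := D.alpha_pos
  set E := Real.exp (-(β * u τ r) ^ 3 - 1) with hE
  have hterm : ∀ i ∈ univ, psi (g τ i) * a τ i ^ 3 ≤ Real.exp 3 * E * α ^ 3 := by
    intro i _
    have hpsi : psi (g τ i) ≤ Real.exp 3 * E := by
      refine (psi_le_exp_neg _).trans ?_
      rw [hE, ← Real.exp_add]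
      exact Real.exp_le_exp.2 (by linarith [D.pow_sub_two_le_margin hτ i r])
    have ha := D.strength_pos τ i
    have haα := (D.strength_mem τ i).2
    gcongr
  calc signalRate η (a τ) (g τ)
      ≤ η / Fintype.card ι * (Fintype.card ι * (Real.exp 3 * E * α ^ 3)) := by
        unfold signalRate
        gcongr
        rw [← nsmul_eq_mul]
        exact sum_le_card_nsmul _ _ _ hterm
    _ = Fintype.card ι / Fintype.card ι * (η * (Real.exp 3 * E * α ^ 3)) := by ring
    _ ≤ η * (Real.exp 3 * E * α ^ 3) := mul_le_of_le_one_left (by positivity) (div_self_le_one _)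
    _ = 2 * Real.exp 3 * η * α ^ 3 * E / 2 := by ring
    _ ≤ β * E / 2 := by gcongr; exact D.eta_mul_le

theorem rate_mul_le_one (D : SignalDynamics α β η ν t u a g) {τ : ℕ} (hτ : τ < t) (r : κ) :
    signalRate η (a τ) (g τ) * u τ r ≤ 1 := by
  rcases le_total (u τ r) 0 with h0 | h0
  · exact (mul_nonpos_of_nonneg_of_nonpos (D.rate_nonneg τ) h0).trans zero_le_one
  have hb : 0 ≤ β * u τ r := mul_nonneg D.beta_pos.le h0
  calc signalRate η (a τ) (g τ) * u τ r
      ≤ β * Real.exp (-(β * u τ r) ^ 3 - 1) / 2 * u τ r := by gcongr; exact D.rate_le hτ r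
    _ = β * u τ r * Real.exp (-(β * u τ r) ^ 3 - 1) / 2 := by ring
    _ ≤ β * u τ r * Real.exp (-(β * u τ r) ^ 3) / 2 := by gcongr; linarith
    _ ≤ 1 := by linarith [mul_exp_neg_cube_le_one (β * u τ r)]

theorem sum_rate_le (D : SignalDynamics α β η ν t u a g) {t₀ : ℕ} (h : t₀ ≤ t) {r : κ}
    (h0 : 0 < u t₀ r) : ∑ τ ∈ Ico t₀ t, signalRate η (a τ) (g τ) ≤ 2 / u t₀ r :=
  sum_step_le_two_div (u := fun τ => u τ r) h D.rate_nonneg (fun τ => D.step τ r) h0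
    fun _ hτ => D.rate_mul_le_one hτ r

theorem mul_le_log (D : SignalDynamics α β η ν t u a g) {τ : ℕ} (hτ : τ ≤ t) (r : κ) :
    β * u τ r ≤ Real.log (3 + t) := by
  have hβ := D.beta_pos
  have hinc : ∀ τ < t, 2 * (β * (signalRate η (a τ) (g τ) * u τ r ^ 2)) *
      Real.exp (β * u τ r + 1) ≤ 1 := by
    intro τ hτ
    set b := β * u τ r with hb
    calc 2 * (β * (signalRate η (a τ) (g τ) * u τ r ^ 2)) * Real.exp (b + 1)
        ≤ 2 * (β * (β * Real.exp (-b ^ 3 - 1) / 2 * u τ r ^ 2)) * Real.exp (b + 1) := by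
          gcongr; exact D.rate_le hτ r
      _ = b ^ 2 * (Real.exp (-b ^ 3 - 1) * Real.exp (b + 1)) := by rw [hb]; ring
      _ = b ^ 2 * Real.exp (b - b ^ 3) := by rw [← Real.exp_add]; ring_nf
      _ ≤ 1 := sq_mul_exp_sub_cube_le_one (D.neg_one_le_mul τ r)
  have hgrowth := exp_le_exp_zero_add (b := fun τ => β * u τ r)
    (fun τ => by rw [D.step, mul_add])
    (fun τ => mul_nonneg hβ.le (mul_nonneg (D.rate_nonneg τ) (sq_nonneg _)))
    (fun τ => D.neg_one_le_mul τ r) hinc τ hτ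
  have hinit : β * u 0 r ≤ 1 := by
    calc β * u 0 r ≤ β * |u 0 r| := by gcongr; exact le_abs_self _
      _ ≤ α * |u 0 r| := by gcongr; exact D.beta_le
      _ ≤ 1 := (D.init_le r).trans (D.nu_le_one r)
  have hexp0 : Real.exp (β * u 0 r) ≤ 3 :=
    (Real.exp_le_exp.2 hinit).trans (by linarith [Real.exp_one_lt_d9])
  have hτt : (τ : ℝ) ≤ t := by exact_mod_cast hτ
  rw [Real.le_log_iff_exp_le (by positivity)]
  linarith

theorem pow_three_sub_mul_pow_three_le (D : SignalDynamics α β η ν t u a g) (hαβ : α ≤ 2 * β)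
    {τ : ℕ} (hτ : τ ≤ t) {K : ℝ} {r : κ} (hu : u τ r ≤ K) (hK : 0 ≤ K) (i k : ι) :
    (a τ k ^ 3 - a τ i ^ 3) * u τ r ^ 3 ≤
      12 * (α - β) * K * Real.log (3 + t) ^ 2 + ν ^ 3 := by
  have hβ := D.beta_pos
  have hα := D.alpha_pos
  have hd : 0 ≤ α - β := sub_nonneg.2 D.beta_le
  have hν := D.nu_nonneg r
  have hpow (j : ι) : a τ j ^ 3 ∈ Set.Icc (β ^ 3) (α ^ 3) := by
    have ha := D.strength_pos τ j
    obtain ⟨hβa, haα⟩ := D.strength_mem τ j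
    exact ⟨by gcongr, by gcongr⟩
  rcases le_total 0 (u τ r) with h0 | h0
  · have hdiff : a τ k ^ 3 - a τ i ^ 3 ≤ 3 * α ^ 2 * (α - β) := by
      linarith [(hpow k).2, (hpow i).1, pow_three_sub_pow_three_le hα.le hβ.le]
    have hlog : α * u τ r ≤ 2 * Real.log (3 + t) := by
      calc α * u τ r ≤ 2 * β * u τ r := by gcongr
        _ ≤ 2 * Real.log (3 + t) := by linarith [D.mul_le_log hτ r]
    calc (a τ k ^ 3 - a τ i ^ 3) * u τ r ^ 3
        ≤ 3 * α ^ 2 * (α - β) * u τ r ^ 3 := by gcongr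
      _ = 3 * (α - β) * (u τ r * (α * u τ r) ^ 2) := by ring
      _ ≤ 3 * (α - β) * (K * (2 * Real.log (3 + t)) ^ 2) := by gcongr
      _ = 12 * (α - β) * K * Real.log (3 + t) ^ 2 := by ring
      _ ≤ _ := le_add_of_nonneg_right (by positivity)
  · have hneg : 0 ≤ -u τ r := neg_nonneg.2 h0
    calc (a τ k ^ 3 - a τ i ^ 3) * u τ r ^ 3
        = (a τ i ^ 3 - a τ k ^ 3) * (-u τ r) ^ 3 := by ring
      _ ≤ α ^ 3 * (-u τ r) ^ 3 := by
          gcongr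
          linarith [(hpow i).2, (hpow k).1, pow_pos hβ 3]
      _ = (-(α * u τ r)) ^ 3 := by ring
      _ ≤ ν ^ 3 := by
          refine (Odd.pow_le_pow (by decide)).2 ?_
          linarith [D.neg_le_mul hα.le le_rfl τ r]
      _ ≤ _ := le_add_of_nonneg_left (by positivity)

theorem margin_le_margin_add_four (D : SignalDynamics α β η ν t u a g) (hαβ : α ≤ 2 * β) {K : ℝ}
    (hK : 0 ≤ K) (hspread : 12 * (α - β) * Fintype.card κ * K * Real.log (3 + t) ^ 2 ≤ 1)
    {τ : ℕ} (hτ : τ < t) (hu : ∀ r, u τ r ≤ K) (i k : ι) : g τ k ≤ g τ i + 4 := by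
  have hsignal : a τ k ^ 3 * ∑ r, u τ r ^ 3 - a τ i ^ 3 * ∑ r, u τ r ^ 3 ≤ 2 := by
    calc a τ k ^ 3 * ∑ r, u τ r ^ 3 - a τ i ^ 3 * ∑ r, u τ r ^ 3
        = ∑ r, (a τ k ^ 3 - a τ i ^ 3) * u τ r ^ 3 := by rw [← sub_mul, mul_sum]
      _ ≤ ∑ _r : κ, (12 * (α - β) * K * Real.log (3 + t) ^ 2 + ν ^ 3) :=
          sum_le_sum fun r _ => D.pow_three_sub_mul_pow_three_le hαβ hτ.le (hu r) hK i k
      _ = 12 * (α - β) * Fintype.card κ * K * Real.log (3 + t) ^ 2 + Fintype.card κ * ν ^ 3 := by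
          rw [sum_const, card_univ, nsmul_eq_mul]; ring
      _ ≤ 2 := by linarith [D.card_mul_le]
  linarith [(abs_le.1 (D.abs_margin_sub_le τ hτ k)).2, (abs_le.1 (D.abs_margin_sub_le τ hτ i)).1]

theorem pow_mul_sum_psi_le_rate (D : SignalDynamics α β η ν t u a g) (τ : ℕ) :
    β ^ 3 * (η / Fintype.card ι * ∑ i, psi (g τ i)) ≤ signalRate η (a τ) (g τ) := by
  have hη := D.eta_nonneg
  have hβ := D.beta_pos
  calc β ^ 3 * (η / Fintype.card ι * ∑ i, psi (g τ i))
      = η / Fintype.card ι * ∑ i, psi (g τ i) * β ^ 3 := by rw [← sum_mul]; ring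
    _ ≤ signalRate η (a τ) (g τ) := by
        unfold signalRate
        gcongr with i
        · exact (psi_pos _).le
        · exact (D.strength_mem τ i).1

theorem pow_mul_psi_le_rate (D : SignalDynamics α β η ν t u a g) (τ : ℕ) (i : ι) :
    β ^ 3 * (η / Fintype.card ι * psi (g τ i)) ≤ signalRate η (a τ) (g τ) := by
  have hη := D.eta_nonneg
  have hβ := D.beta_pos
  refine le_trans ?_ (D.pow_mul_sum_psi_le_rate τ)
  gcongr
  exact single_le_sum (f := fun k => psi (g τ k)) (fun k _ => (psi_pos _).le) (mem_univ i)

theorem pow_mul_psi_le_rate_div_card (D : SignalDynamics α β η ν t u a g) {τ : ℕ} {c : ℝ}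
    (hc : 0 ≤ c) {i : ι} (hg : ∀ k, g τ k ≤ g τ i + c) :
    β ^ 3 * (η / Fintype.card ι * psi (g τ i)) ≤
      Real.exp c / Fintype.card ι * signalRate η (a τ) (g τ) := by
  have hη := D.eta_nonneg
  have hβ := D.beta_pos
  have : Nonempty ι := ⟨i⟩
  have hcard : (0 : ℝ) < Fintype.card ι := by exact_mod_cast Fintype.card_pos
  have havg : psi (g τ i) ≤ Real.exp c / Fintype.card ι * ∑ k, psi (g τ k) := by
    rw [div_mul_eq_mul_div, le_div_iff₀ hcard, mul_sum, mul_comm, ← nsmul_eq_mul]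
    exact card_nsmul_le_sum _ _ _ fun k _ => psi_le_exp_mul_psi hc (hg k)
  calc β ^ 3 * (η / Fintype.card ι * psi (g τ i))
      ≤ β ^ 3 * (η / Fintype.card ι * (Real.exp c / Fintype.card ι * ∑ k, psi (g τ k))) := by
        gcongr
    _ = Real.exp c / Fintype.card ι * (β ^ 3 * (η / Fintype.card ι * ∑ k, psi (g τ k))) := by ring
    _ ≤ Real.exp c / Fintype.card ι * signalRate η (a τ) (g τ) := by
        gcongr; exact D.pow_mul_sum_psi_le_rate τ

theorem exists_forall_le_and_sum_rate_le (D : SignalDynamics α β η ν t u a g) {K : ℝ}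
    (hK : 0 < K) :
    ∃ t₀ ≤ t, (∀ τ < t₀, ∀ r, u τ r ≤ K) ∧
      ∑ τ ∈ Ico t₀ t, signalRate η (a τ) (g τ) ≤ 2 / K := by
  classical
  by_cases hex : ∃ τ, τ < t ∧ ∃ r, K < u τ r
  · obtain ⟨hlt, r, hr⟩ := Nat.find_spec hex
    refine ⟨Nat.find hex, hlt.le, fun τ hτ r' => ?_, ?_⟩
    · by_contra! hKr
      exact Nat.find_min hex hτ ⟨hτ.trans hlt, r', hKr⟩
    · refine (D.sum_rate_le hlt.le (hK.trans hr)).trans ?_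
      gcongr
  · push Not at hex
    exact ⟨t, le_rfl, hex, by rw [Ico_self, sum_empty]; positivity⟩

-- Until some neuron exceeds `K` all samples carry comparable loss derivatives, hence each at most
-- a constant multiple of the average; after that time the total rate is only `2 / K`.
theorem sum_psi_le (D : SignalDynamics α β η ν t u a g) (hαβ : α ≤ 2 * β) {K : ℝ} (hK : 0 < K)
    (hspread : 12 * (α - β) * Fintype.card κ * K * Real.log (3 + t) ^ 2 ≤ 1)
    {r : κ} (hr : 0 < u 0 r) (i : ι) :
    ∑ τ ∈ range t, η / Fintype.card ι * psi (g τ i) ≤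
      (Real.exp 4 / Fintype.card ι * (2 / u 0 r) + 2 / K) / β ^ 3 := by
  obtain ⟨t₀, ht₀, hearly, hlate⟩ := D.exists_forall_le_and_sum_rate_le hK
  have hβ := D.beta_pos
  have htotal : ∑ τ ∈ range t₀, signalRate η (a τ) (g τ) ≤ 2 / u 0 r := by
    refine le_trans ?_ (D.sum_rate_le (Nat.zero_le t) hr)
    rw [Nat.Ico_zero_eq_range]
    exact sum_le_sum_of_subset_of_nonneg (range_mono ht₀) fun τ _ _ => D.rate_nonneg τ
  rw [le_div_iff₀' (by positivity), mul_sum, ← sum_range_add_sum_Ico _ ht₀]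
  refine add_le_add ?_ ((sum_le_sum fun τ _ => D.pow_mul_psi_le_rate τ i).trans hlate)
  calc ∑ τ ∈ range t₀, β ^ 3 * (η / Fintype.card ι * psi (g τ i))
      ≤ ∑ τ ∈ range t₀, Real.exp 4 / Fintype.card ι * signalRate η (a τ) (g τ) := by
        refine sum_le_sum fun τ hτ => ?_
        have hτ := mem_range.1 hτ
        exact D.pow_mul_psi_le_rate_div_card (by norm_num)
          (D.margin_le_margin_add_four hαβ hK.le hspread (hτ.trans_le ht₀) (hearly τ hτ) i)
    _ = Real.exp 4 / Fintype.card ι * ∑ τ ∈ range t₀, signalRate η (a τ) (g τ) := by rw [mul_sum]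
    _ ≤ Real.exp 4 / Fintype.card ι * (2 / u 0 r) := by gcongr

end SignalDynamics

end SignalDynamics

section Network

theorem dot_eq_dotProduct {d : ℕ} (a b : Fin d → ℝ) : dot a b = a ⬝ᵥ b := rfl

theorem dot_e1 {d : ℕ} (hd : 0 < d) (a : Fin d → ℝ) : dot a (e1 d hd) = a ⟨0, hd⟩ := by
  simp [dot, e1]

theorem netOut_eq_sum_pow_three {m P d : ℕ} (w : Fin m → Fin d → ℝ) (X : Fin P → Fin d → ℝ) :
    netOut w X = ∑ r, ∑ p, dot (w r) (X p) ^ 3 := by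
  simp only [netOut, phi_sub_phi_neg]

end Network

namespace Setting

variable {S : Setting}

section Decomposition

theorem y_mul_self (i : Fin S.N) : S.y i * S.y i = 1 := by
  rcases S.hy i with h | h <;> rw [h] <;> norm_num

theorem abs_y (i : Fin S.N) : |S.y i| = 1 := by
  rcases S.hy i with h | h <;> rw [h] <;> norm_num

theorem mem_SL_or_mem_SU (i : Fin S.N) : i ∈ S.SL ∨ i ∈ S.SU :=
  mem_union.1 (S.hunion ▸ mem_univ i)

/-- The signed strength `⟨y_i x̃_{i,s(X_i)}, u⟩` of the perturbed signal patch; it lies in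
`[α - ε, α]` for learnable samples. -/
def advSignal (S : Setting) (t : ℕ) (i : Fin S.N) : ℝ :=
  S.y i * dot (S.xadv t i (S.sig i)) (e1 S.d S.hd)

theorem exists_xadv_sig_eq_smul (t : ℕ) (i : Fin S.N) :
    ∃ c : ℝ, S.xadv t i (S.sig i) = c • S.x i (S.sig i) := by
  obtain ⟨c, hc⟩ := S.hadvspan t i
  exact ⟨c + 1, by rw [add_smul, one_smul, ← hc, sub_add_cancel]⟩

theorem xadv_sig_eq {i : Fin S.N} (hi : i ∈ S.SL) (t : ℕ) :
    S.xadv t i (S.sig i) = (S.y i * S.advSignal t i) • e1 S.d S.hd := by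
  obtain ⟨c, hc⟩ := exists_xadv_sig_eq_smul t i
  have hspan : S.xadv t i (S.sig i) = (c * (S.alpha * S.y i)) • e1 S.d S.hd := by
    rw [hc, S.hsigL i hi, smul_smul]
  have hcoord : dot (S.xadv t i (S.sig i)) (e1 S.d S.hd) = c * (S.alpha * S.y i) := by
    rw [hspan, dot_e1]
    simp [e1]
  rw [advSignal, ← mul_assoc, y_mul_self, one_mul, hcoord, hspan]

theorem dot_w_xadv_sig {i : Fin S.N} (hi : i ∈ S.SL) (t : ℕ) (r : Fin S.m) :
    dot (S.w t r) (S.xadv t i (S.sig i)) = S.y i * S.advSignal t i * S.wsig t r := by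
  rw [xadv_sig_eq hi, dot_eq_dotProduct, dotProduct_smul, ← dot_eq_dotProduct, dot_e1, smul_eq_mul,
    wsig]

theorem dot_xadv_sig_noise (t : ℕ) (i k : Fin S.N) {q : Fin S.P} (hq : q ≠ S.sig k) :
    dot (S.xadv t i (S.sig i)) (S.x k q) = 0 := by
  obtain ⟨c, hc⟩ := exists_xadv_sig_eq_smul t i
  have hsig : dot (S.x k q) (S.x i (S.sig i)) = 0 := by
    rcases mem_SL_or_mem_SU i with hi | hi
    · rw [S.hsigL i hi, dot_eq_dotProduct, dotProduct_smul, ← dot_eq_dotProduct, S.hnoiseU k q hq,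
        smul_zero]
    · rw [S.hsigU i hi, dot_eq_dotProduct, dotProduct_smul, ← dot_eq_dotProduct, S.hnoiseV k q hq,
        smul_zero]
  rw [hc, dot_eq_dotProduct, smul_dotProduct, dotProduct_comm, ← dot_eq_dotProduct, hsig, smul_zero]

theorem dot_w_succ (hdyn : S.ATDyn) (t : ℕ) (r : Fin S.m) (z : Fin S.d → ℝ) :
    dot (S.w (t + 1) r) z = dot (S.w t r) z + 3 * S.eta / S.N *
      ∑ i, psi (S.marg t i) * S.y i *
        ∑ p, dot (S.w t r) (S.xadv t i p) ^ 2 * dot (S.xadv t i p) z := by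
  simp only [hdyn t r, dot_eq_dotProduct, add_dotProduct, smul_dotProduct, sum_dotProduct,
    smul_eq_mul]

theorem wsig_succ (hdyn : S.ATDyn) (hU : S.SU = ∅) (t : ℕ) (r : Fin S.m) :
    S.wsig (t + 1) r = S.wsig t r +
      signalRate (3 * S.eta) (S.advSignal t) (S.marg t) * S.wsig t r ^ 2 := by
  have hsample (i : Fin S.N) : S.y i * ∑ p, dot (S.w t r) (S.xadv t i p) ^ 2 *
      dot (S.xadv t i p) (e1 S.d S.hd) = S.advSignal t i ^ 3 * S.wsig t r ^ 2 := by
    have hi : i ∈ S.SL := (mem_SL_or_mem_SU i).resolve_right (by simp [hU])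
    rw [sum_eq_single_of_mem (S.sig i) (mem_univ _) fun p _ hp => by
        rw [S.hadvnoise t i p hp, S.hnoiseU i p hp, mul_zero], dot_w_xadv_sig hi]
    calc S.y i * ((S.y i * S.advSignal t i * S.wsig t r) ^ 2 *
          dot (S.xadv t i (S.sig i)) (e1 S.d S.hd))
        = S.y i * S.y i * S.advSignal t i ^ 2 * S.wsig t r ^ 2 * S.advSignal t i := by
          rw [advSignal]; ring
      _ = S.advSignal t i ^ 3 * S.wsig t r ^ 2 := by rw [y_mul_self]; ring
  have hstep := dot_w_succ hdyn t r (e1 S.d S.hd)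
  simp only [dot_e1 S.hd (S.w _ r), mul_assoc, hsample] at hstep
  simp only [wsig, signalRate, Fintype.card_fin] at hstep ⊢
  rw [hstep, mul_assoc (3 * S.eta / S.N : ℝ), sum_mul]
  simp only [mul_assoc]

theorem marg_eq {i : Fin S.N} (hi : i ∈ S.SL) (t : ℕ) :
    S.marg t i = S.advSignal t i ^ 3 * ∑ r, S.wsig t r ^ 3 +
      S.y i * ∑ r, ∑ p ∈ univ.erase (S.sig i), dot (S.w t r) (S.x i p) ^ 3 := by
  have hpatch (r : Fin S.m) : S.y i * ∑ p, dot (S.w t r) (S.xadv t i p) ^ 3 =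
      S.advSignal t i ^ 3 * S.wsig t r ^ 3 +
        S.y i * ∑ p ∈ univ.erase (S.sig i), dot (S.w t r) (S.x i p) ^ 3 := by
    rw [← add_sum_erase _ _ (mem_univ (S.sig i)), mul_add, dot_w_xadv_sig hi]
    congr 1
    · linear_combination (S.y i * S.y i + 1) * S.advSignal t i ^ 3 * S.wsig t r ^ 3 * y_mul_self i
    · congr 1
      exact sum_congr rfl fun p hp => by rw [S.hadvnoise t i p (ne_of_mem_erase hp)]
  rw [marg, netOut_eq_sum_pow_three, mul_sum, mul_sum, mul_sum, ← sum_add_distrib]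
  exact sum_congr rfl fun r _ => hpatch r

theorem abs_marg_sub_le {i : Fin S.N} (hi : i ∈ S.SL) {t : ℕ} {B : ℝ} (hB0 : 0 ≤ B)
    (hB : ∀ r, ∀ p ≠ S.sig i, |dot (S.w t r) (S.x i p)| ≤ B) :
    |S.marg t i - S.advSignal t i ^ 3 * ∑ r, S.wsig t r ^ 3| ≤ S.m * (S.P * B ^ 3) := by
  have hpatch (r : Fin S.m) :
      |∑ p ∈ univ.erase (S.sig i), dot (S.w t r) (S.x i p) ^ 3| ≤ S.P * B ^ 3 := by
    calc |∑ p ∈ univ.erase (S.sig i), dot (S.w t r) (S.x i p) ^ 3|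
        ≤ ∑ p ∈ univ.erase (S.sig i), |dot (S.w t r) (S.x i p)| ^ 3 := by
          simp only [← abs_pow]
          exact abs_sum_le_sum_abs _ _
      _ ≤ ∑ _p ∈ univ.erase (S.sig i), B ^ 3 := by
          gcongr with p hp
          exact hB r p (ne_of_mem_erase hp)
      _ ≤ ∑ _p : Fin S.P, B ^ 3 :=
          sum_le_sum_of_subset_of_nonneg (erase_subset _ _) fun _ _ _ => by positivity
      _ = S.P * B ^ 3 := by rw [sum_const, card_univ, Fintype.card_fin, nsmul_eq_mul]
  rw [marg_eq hi, add_sub_cancel_left, abs_mul, abs_y, one_mul]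
  calc |∑ r, ∑ p ∈ univ.erase (S.sig i), dot (S.w t r) (S.x i p) ^ 3|
      ≤ ∑ _r : Fin S.m, S.P * B ^ 3 :=
        (abs_sum_le_sum_abs _ _).trans (sum_le_sum fun r _ => hpatch r)
    _ = S.m * (S.P * B ^ 3) := by rw [sum_const, card_univ, Fintype.card_fin, nsmul_eq_mul]

theorem rho_succ_sub (i : Fin S.N) (j : Fin S.P) (r : Fin S.m) (t : ℕ) :
    S.rho i j r (t + 1) - S.rho i j r t =
      3 * S.eta / S.N * psi (S.marg t i) * dot (S.w t r) (S.x i j) ^ 2 :=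
  add_sub_cancel_left _ _

theorem step_nonneg : 0 ≤ 3 * S.eta / S.N :=
  div_nonneg (mul_nonneg zero_le_three S.heta.le) (Nat.cast_nonneg _)

theorem rho_nonneg (i : Fin S.N) (j : Fin S.P) (r : Fin S.m) (t : ℕ) : 0 ≤ S.rho i j r t := by
  induction t with
  | zero => exact le_rfl
  | succ t ih =>
    exact add_nonneg ih
      (mul_nonneg (mul_nonneg step_nonneg (psi_pos _).le) (sq_nonneg _))

theorem rho_le_sum_psi_mul_sq {i : Fin S.N} {j : Fin S.P} {r : Fin S.m} {t : ℕ} {B : ℝ}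
    (hB : ∀ τ < t, |dot (S.w τ r) (S.x i j)| ≤ B) :
    S.rho i j r t ≤ (∑ τ ∈ range t, 3 * S.eta / S.N * psi (S.marg τ i)) * B ^ 2 := by
  have htelescope : S.rho i j r t = ∑ τ ∈ range t,
      3 * S.eta / S.N * psi (S.marg τ i) * dot (S.w τ r) (S.x i j) ^ 2 := by
    calc S.rho i j r t = S.rho i j r t - S.rho i j r 0 := (sub_zero _).symm
      _ = _ := by rw [← sum_range_sub (S.rho i j r)]; simp only [rho_succ_sub]
  rw [htelescope, sum_mul]
  refine sum_le_sum fun τ hτ => mul_le_mul_of_nonneg_left ?_ ?_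
  · exact sq_le_sq.2 ((hB τ (mem_range.1 hτ)).trans (le_abs_self B))
  · exact mul_nonneg step_nonneg (psi_pos _).le

/-- The index set of the noise patches: the pairs `(i, j)` with `j ≠ s(X_i)`. -/
def noiseIdx (S : Setting) : Finset (Fin S.N × Fin S.P) :=
  univ.filter fun a => a.2 ≠ S.sig a.1

theorem mem_noiseIdx {a : Fin S.N × Fin S.P} : a ∈ S.noiseIdx ↔ a.2 ≠ S.sig a.1 := by
  simp [noiseIdx]

theorem card_noiseIdx_le : (#S.noiseIdx : ℝ) ≤ S.N * S.P := by
  have hcard := card_le_univ S.noiseIdx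
  rw [Fintype.card_prod, Fintype.card_fin, Fintype.card_fin] at hcard
  exact_mod_cast hcard

theorem dot_w_noise_succ (hdyn : S.ATDyn) (t : ℕ) (r : Fin S.m) {k : Fin S.N} {q : Fin S.P}
    (hq : q ≠ S.sig k) :
    dot (S.w (t + 1) r) (S.x k q) = dot (S.w t r) (S.x k q) +
      ∑ a ∈ S.noiseIdx, S.y a.1 * (S.rho a.1 a.2 r (t + 1) - S.rho a.1 a.2 r t) *
        dot (S.x a.1 a.2) (S.x k q) := by
  rw [dot_w_succ hdyn, noiseIdx, sum_filter, Fintype.sum_prod_type, mul_sum]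
  congr 1
  refine sum_congr rfl fun i _ => ?_
  rw [mul_sum, mul_sum]
  refine sum_congr rfl fun p _ => ?_
  split_ifs with hp
  · rw [rho_succ_sub, S.hadvnoise t i p hp]; ring
  · obtain rfl : p = S.sig i := not_not.1 hp
    rw [dot_xadv_sig_noise t i k hq]; ring

theorem dot_w_noise_eq (hdyn : S.ATDyn) (t : ℕ) (r : Fin S.m) {k : Fin S.N} {q : Fin S.P}
    (hq : q ≠ S.sig k) :
    dot (S.w t r) (S.x k q) = dot (S.w 0 r) (S.x k q) +
      ∑ a ∈ S.noiseIdx, S.y a.1 * S.rho a.1 a.2 r t * dot (S.x a.1 a.2) (S.x k q) := by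
  induction t with
  | zero => simp [rho]
  | succ t ih =>
    rw [dot_w_noise_succ hdyn t r hq, ih, add_assoc, ← sum_add_distrib]
    congr 1
    exact sum_congr rfl fun a _ => by ring

theorem abs_dot_w_noise_sub_le (hdyn : S.ATDyn) {t : ℕ} {r : Fin S.m} {k : Fin S.N} {q : Fin S.P}
    (hq : q ≠ S.sig k) {R V c : ℝ} (hρ : ∀ i, ∀ j ≠ S.sig i, S.rho i j r t ≤ R)
    (hV : sqnorm (S.x k q) ≤ V) (hc : 0 ≤ c)
    (hcross : ∀ i, ∀ j ≠ S.sig i, (i, j) ≠ (k, q) → |dot (S.x i j) (S.x k q)| ≤ c) :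
    |dot (S.w t r) (S.x k q) - dot (S.w 0 r) (S.x k q)| ≤ R * (V + S.N * S.P * c) := by
  have hR : 0 ≤ R := (rho_nonneg k q r t).trans (hρ k q hq)
  have habs (a : Fin S.N × Fin S.P) (ha : a ∈ S.noiseIdx) :
      |S.y a.1 * S.rho a.1 a.2 r t * dot (S.x a.1 a.2) (S.x k q)| ≤
        R * |dot (S.x a.1 a.2) (S.x k q)| := by
    rw [abs_mul, abs_mul, abs_y, one_mul, abs_of_nonneg (rho_nonneg _ _ _ _)]
    gcongr
    exact hρ _ _ (mem_noiseIdx.1 ha)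
  have hself : |dot (S.x k q) (S.x k q)| = sqnorm (S.x k q) :=
    abs_of_nonneg (sum_nonneg fun _ _ => mul_self_nonneg _)
  rw [dot_w_noise_eq hdyn t r hq, add_sub_cancel_left]
  calc |∑ a ∈ S.noiseIdx, S.y a.1 * S.rho a.1 a.2 r t * dot (S.x a.1 a.2) (S.x k q)|
      ≤ R * V + #S.noiseIdx * (R * c) := by
        refine abs_sum_le_add_card_mul (a := (k, q)) (mem_noiseIdx.2 hq) ?_ (by positivity) ?_
        · refine (habs (k, q) (mem_noiseIdx.2 hq)).trans ?_
          rw [hself]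
          gcongr
        · intro a ha hne
          refine (habs a ha).trans ?_
          gcongr
          exact hcross a.1 a.2 (mem_noiseIdx.1 ha) hne
    _ ≤ R * V + S.N * S.P * (R * c) := by gcongr; exact card_noiseIdx_le
    _ = R * (V + S.N * S.P * c) := by ring

end Decomposition

section Bounds

/-- The logarithmic factor `log(16NmP/δ)` of the noise responses. -/
def noiseLog (S : Setting) : ℝ := Real.log ((16 : ℝ) * S.N * S.m * S.P / S.delta)

/-- The initialization scale `3σ₀σ_n√(d log(16NmP/δ))` of the noise responses. -/
def noiseScale (S : Setting) : ℝ :=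
  3 * S.sigma0 * S.sigman * Real.sqrt (S.d * S.noiseLog)

/-- The scale `log(16NmP/δ) σ₀σ_n²d / (N(α-ε)³)` of the noise coefficients. -/
def rhoScale (S : Setting) : ℝ :=
  S.noiseLog * (S.sigma0 * S.sigman ^ 2 * S.d) / (S.N * (S.alpha - S.eps) ^ 3)

/-- The concentration bounds of the event `E` on which noise stability rests: noise norms from
above (P1), noise inner products (P2), and the correlations of the initialization with signal and
noise (P5)–(P7). -/
structure ConcentrationBounds (S : Setting) : Prop where
  sqnorm_le : ∀ i, ∀ j ≠ S.sig i, sqnorm (S.x i j) ≤ 3 * S.sigman ^ 2 * S.d / 2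
  abs_dot_le : ∀ k, ∀ q ≠ S.sig k, ∀ i, ∀ j ≠ S.sig i, (i, j) ≠ (k, q) →
    |dot (S.x i j) (S.x k q)| ≤
      2 * S.sigman ^ 2 * Real.sqrt (S.d * Real.log (16 * S.N ^ 2 * S.P ^ 2 / S.delta))
  abs_wsig_zero_le : ∀ r,
    |S.wsig 0 r| ≤ S.sigma0 * Real.sqrt (2 * Real.log (16 * S.m / S.delta))
  abs_dot_w_zero_le : ∀ r i, ∀ j ≠ S.sig i,
    |dot (S.w 0 r) (S.x i j)| ≤ 2 * S.sigma0 * S.sigman * Real.sqrt (S.d * S.noiseLog)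
  exists_le_wsig_zero : ∃ r, S.sigma0 / 2 ≤ S.wsig 0 r

theorem EventE.concentrationBounds (hE : S.EventE) : S.ConcentrationBounds := by
  obtain ⟨hP1, hP2, -, -, hP5, hP6, hP7, -⟩ := hE
  simp only [dot_e1] at hP5 hP7
  exact ⟨fun i j hj => (hP1 i j hj).2, fun k q hq i j hj => hP2 i k j q hj hq, hP5, hP6, hP7⟩

/-- The relations between the parameters on which noise stability rests: the budget, the step size,
the initial signal and noise parts of a margin and the spread of the perturbed signal strengths
are small, the dimension makes the noise patches nearly orthogonal, and the signal dominates the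
noise. -/
structure ParameterBounds (S : Setting) : Prop where
  eps_le : 2 * S.eps ≤ S.alpha
  eta_le : 12 * Real.exp 3 * (S.eta * S.alpha ^ 2) ≤ 1
  init_signal_le :
    S.m * (S.alpha * (S.sigma0 * Real.sqrt (2 * Real.log (16 * S.m / S.delta)))) ^ 3 ≤ 1
  init_noise_le : S.m * (S.P * S.noiseScale ^ 3) ≤ 1
  spread_le : 12 * S.eps * S.m * (S.N * S.sigma0) * Real.log (3 + S.T) ^ 2 ≤ 1
  cross_le : 4 * (S.N * S.P) * Real.sqrt (S.d * Real.log (16 * S.N ^ 2 * S.P ^ 2 / S.delta)) ≤ S.d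
  signal_ge :
    4000 * Real.sqrt S.noiseLog * (S.sigman * Real.sqrt S.d) ^ 3 ≤ S.N * (S.alpha - S.eps) ^ 3

theorem one_le_N : (1 : ℝ) ≤ S.N := by exact_mod_cast S.hN

theorem one_le_m : (1 : ℝ) ≤ S.m := by exact_mod_cast S.hm

theorem one_le_P : (1 : ℝ) ≤ S.P := by exact_mod_cast S.hP

theorem one_le_d : (1 : ℝ) ≤ S.d := by exact_mod_cast S.hd

theorem noiseLog_nonneg : 0 ≤ S.noiseLog := by
  refine Real.log_nonneg ((one_le_div S.hdelta0).2 (S.hdelta1.le.trans ?_))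
  have hNm := one_le_mul_of_one_le_of_one_le (one_le_N (S := S)) (one_le_m (S := S))
  have hNmP := one_le_mul_of_one_le_of_one_le hNm (one_le_P (S := S))
  linarith

theorem noiseScale_nonneg : 0 ≤ S.noiseScale := by
  have := S.hsigma0
  have := S.hsigman
  unfold noiseScale
  positivity

theorem noiseScale_sq : S.noiseScale ^ 2 = 9 * S.sigma0 ^ 2 * S.sigman ^ 2 * S.d * S.noiseLog := by
  rw [noiseScale, mul_pow, Real.sq_sqrt (mul_nonneg (Nat.cast_nonneg _) noiseLog_nonneg)]
  ring

theorem beta_pos : 0 < S.alpha - S.eps := sub_pos.2 S.hepsalpha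

theorem rhoScale_nonneg : 0 ≤ S.rhoScale :=
  div_nonneg (mul_nonneg noiseLog_nonneg
      (mul_nonneg (mul_nonneg S.hsigma0.le (sq_nonneg _)) (Nat.cast_nonneg _)))
    (mul_nonneg (Nat.cast_nonneg _) (pow_nonneg beta_pos.le 3))

theorem ParameterBounds.rhoScale_mul_le (B : S.ParameterBounds) :
    2000 * S.rhoScale * (2 * S.sigman ^ 2 * S.d) ≤ S.noiseScale / 3 := by
  have hN : (0 : ℝ) < S.N := by exact_mod_cast S.hN
  have hβ := beta_pos (S := S)
  have hσ0 := S.hsigma0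
  have hσn := S.hsigman
  set l := Real.sqrt S.noiseLog
  set b := Real.sqrt S.d
  have hl2 : S.noiseLog = l ^ 2 := (Real.sq_sqrt noiseLog_nonneg).symm
  have hb2 : (S.d : ℝ) = b ^ 2 := (Real.sq_sqrt (Nat.cast_nonneg _)).symm
  have hscale : S.noiseScale / 3 = S.sigma0 * S.sigman * b * l := by
    rw [noiseScale, Real.sqrt_mul (Nat.cast_nonneg _)]; ring
  rw [hscale, rhoScale, hl2, hb2]
  calc 2000 * (l ^ 2 * (S.sigma0 * S.sigman ^ 2 * b ^ 2) / (S.N * (S.alpha - S.eps) ^ 3)) *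
        (2 * S.sigman ^ 2 * b ^ 2)
      = S.sigma0 * S.sigman * b * l *
          ((4000 * l * (S.sigman * b) ^ 3) / (S.N * (S.alpha - S.eps) ^ 3)) := by ring
    _ ≤ S.sigma0 * S.sigman * b * l * 1 := by
        gcongr
        exact (div_le_one (by positivity)).2 B.signal_ge
    _ = S.sigma0 * S.sigman * b * l := mul_one _

theorem abs_dot_w_le_noiseScale (hdyn : S.ATDyn) (E : S.ConcentrationBounds)
    (B : S.ParameterBounds) {t : ℕ} {r : Fin S.m}
    (hρ : ∀ i, ∀ j ≠ S.sig i, S.rho i j r t ≤ 2000 * S.rhoScale) {k : Fin S.N} {q : Fin S.P}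
    (hq : q ≠ S.sig k) : |dot (S.w t r) (S.x k q)| ≤ S.noiseScale := by
  have hdrift := abs_dot_w_noise_sub_le hdyn hq hρ (E.sqnorm_le k q hq) (by positivity)
    (E.abs_dot_le k q hq)
  set c := Real.sqrt (S.d * Real.log (16 * S.N ^ 2 * S.P ^ 2 / S.delta))
  have hgram : 3 * S.sigman ^ 2 * S.d / 2 + S.N * S.P * (2 * S.sigman ^ 2 * c) ≤
      2 * S.sigman ^ 2 * S.d := by
    have := mul_le_mul_of_nonneg_left B.cross_le (sq_nonneg S.sigman)
    linarith
  have hmove : |dot (S.w t r) (S.x k q) - dot (S.w 0 r) (S.x k q)| ≤ S.noiseScale / 3 := by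
    refine hdrift.trans (le_trans ?_ B.rhoScale_mul_le)
    have := rhoScale_nonneg (S := S)
    gcongr
  have hinit : |dot (S.w 0 r) (S.x k q)| ≤ 2 / 3 * S.noiseScale := by
    refine (E.abs_dot_w_zero_le r k q hq).trans_eq ?_
    rw [noiseScale]; ring
  linarith [abs_sub_abs_le_abs_sub (dot (S.w t r) (S.x k q)) (dot (S.w 0 r) (S.x k q))]

theorem signalDynamics (hdyn : S.ATDyn) (E : S.ConcentrationBounds) (B : S.ParameterBounds)
    (hU : S.SU = ∅) {t : ℕ}
    (hnoise : ∀ τ < t, ∀ r i, ∀ j ≠ S.sig i, |dot (S.w τ r) (S.x i j)| ≤ S.noiseScale) :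
    SignalDynamics S.alpha (S.alpha - S.eps) (3 * S.eta)
      (S.alpha * (S.sigma0 * Real.sqrt (2 * Real.log (16 * S.m / S.delta)))) t
      S.wsig S.advSignal S.marg where
  beta_pos := beta_pos
  beta_le := sub_le_self _ S.heps.le
  eta_nonneg := mul_nonneg zero_le_three S.heta.le
  eta_mul_le := by
    have := mul_le_mul_of_nonneg_left B.eta_le S.halpha.le
    linarith [B.eps_le]
  strength_mem τ i := S.hadvlearn τ i ((mem_SL_or_mem_SU i).resolve_right (by simp [hU]))
  step := wsig_succ hdyn hU
  abs_margin_sub_le τ hτ i :=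
    (abs_marg_sub_le ((mem_SL_or_mem_SU i).resolve_right (by simp [hU])) noiseScale_nonneg
      fun r => hnoise τ hτ r i).trans B.init_noise_le
  init_le r := mul_le_mul_of_nonneg_left (E.abs_wsig_zero_le r) S.halpha.le
  card_mul_le := by rw [Fintype.card_fin]; exact B.init_signal_le

theorem sum_step_mul_psi_le (hdyn : S.ATDyn) (E : S.ConcentrationBounds) (B : S.ParameterBounds)
    (hU : S.SU = ∅) {t : ℕ} (ht : t ≤ S.T)
    (hnoise : ∀ τ < t, ∀ r i, ∀ j ≠ S.sig i, |dot (S.w τ r) (S.x i j)| ≤ S.noiseScale)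
    (i : Fin S.N) :
    ∑ τ ∈ range t, 3 * S.eta / S.N * psi (S.marg τ i) ≤
      222 / (S.N * S.sigma0 * (S.alpha - S.eps) ^ 3) := by
  have hN : (0 : ℝ) < S.N := by exact_mod_cast S.hN
  have hβ := beta_pos (S := S)
  have hσ0 := S.hsigma0
  have hε := S.heps
  obtain ⟨r, hr⟩ := E.exists_le_wsig_zero
  have htT : (t : ℝ) ≤ S.T := by exact_mod_cast ht
  have hspread : 12 * (S.alpha - (S.alpha - S.eps)) * Fintype.card (Fin S.m) * (S.N * S.sigma0) *
      Real.log (3 + t) ^ 2 ≤ 1 := by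
    rw [sub_sub_cancel, Fintype.card_fin]
    refine le_trans ?_ B.spread_le
    have := Real.log_nonneg (by linarith [Nat.cast_nonneg (α := ℝ) t] : (1 : ℝ) ≤ 3 + t)
    gcongr
  have hsum := (signalDynamics hdyn E B hU hnoise).sum_psi_le (by linarith [B.eps_le])
    (mul_pos hN hσ0) hspread (by linarith : 0 < S.wsig 0 r) i
  rw [Fintype.card_fin] at hsum
  calc ∑ τ ∈ range t, 3 * S.eta / S.N * psi (S.marg τ i)
      ≤ (Real.exp 4 / S.N * (2 / S.wsig 0 r) + 2 / (S.N * S.sigma0)) / (S.alpha - S.eps) ^ 3 := hsum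
    _ ≤ (55 / S.N * (2 / (S.sigma0 / 2)) + 2 / (S.N * S.sigma0)) / (S.alpha - S.eps) ^ 3 := by
        have hw : 0 < S.wsig 0 r := by linarith
        gcongr
        exact exp_four_le
    _ = 222 / (S.N * S.sigma0 * (S.alpha - S.eps) ^ 3) := by field_simp; norm_num

theorem rho_le_rhoScale (hdyn : S.ATDyn) (E : S.ConcentrationBounds) (B : S.ParameterBounds)
    (hU : S.SU = ∅) {t : ℕ} (ht : t ≤ S.T)
    (hnoise : ∀ τ < t, ∀ r i, ∀ j ≠ S.sig i, |dot (S.w τ r) (S.x i j)| ≤ S.noiseScale)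
    (r : Fin S.m) (i : Fin S.N) {j : Fin S.P} (hj : j ≠ S.sig i) :
    S.rho i j r t ≤ 2000 * S.rhoScale := by
  have hN : (0 : ℝ) < S.N := by exact_mod_cast S.hN
  have hβ := beta_pos (S := S)
  have hσ0 := S.hsigma0
  calc S.rho i j r t
      ≤ (∑ τ ∈ range t, 3 * S.eta / S.N * psi (S.marg τ i)) * S.noiseScale ^ 2 :=
        rho_le_sum_psi_mul_sq fun τ hτ => hnoise τ hτ r i j hj
    _ ≤ 222 / (S.N * S.sigma0 * (S.alpha - S.eps) ^ 3) * S.noiseScale ^ 2 := by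
        gcongr
        exact sum_step_mul_psi_le hdyn E B hU ht hnoise i
    _ = 1998 * S.rhoScale := by
        rw [noiseScale_sq, rhoScale]
        field_simp
        ring
    _ ≤ 2000 * S.rhoScale := by linarith [rhoScale_nonneg (S := S)]

theorem forall_abs_dot_w_le_noiseScale (hdyn : S.ATDyn) (E : S.ConcentrationBounds)
    (B : S.ParameterBounds) (hU : S.SU = ∅) {t : ℕ} (ht : t ≤ S.T) :
    ∀ r i, ∀ j ≠ S.sig i, |dot (S.w t r) (S.x i j)| ≤ S.noiseScale := by
  induction t using Nat.strong_induction_on with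
  | _ t ih =>
    intro r i j hj
    exact abs_dot_w_le_noiseScale hdyn E B (fun i' j' => rho_le_rhoScale hdyn E B hU ht
      (fun τ hτ => ih τ hτ (hτ.le.trans ht)) r i') hj

end Bounds

section Condition

variable {C : ℝ}

/-- The ratio `TNmP/δ`, to whose logarithm all logarithmic factors of Condition (H) and of the
event `E` are comparable. -/
def condRatio (S : Setting) : ℝ := S.T * S.N * S.m * S.P / S.delta

theorem CondH.one_le_T (H : S.CondH C) : (1 : ℝ) ≤ S.T := by
  have hN := one_le_N (S := S)
  have hd := one_le_d (S := S)
  have hη := S.heta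
  have hσ0 := S.hsigma0
  have hσn := S.hsigman
  have hC : 0 < C := zero_lt_one.trans_le H.1
  have hT : 0 < S.T := Nat.cast_pos.1 (lt_of_lt_of_le (by positivity) H.2.1)
  exact_mod_cast hT

theorem CondH.two_le_P (H : S.CondH C) : (2 : ℝ) ≤ S.P := by
  obtain ⟨-, -, -, -, -, -, -, -, -, -, hP, -⟩ := H
  exact_mod_cast hP

theorem CondH.div_le_condRatio (H : S.CondH C) : S.N * S.m * S.P / S.delta ≤ S.condRatio := by
  have hδ := S.hdelta0
  calc S.N * S.m * S.P / S.delta ≤ S.T * (S.N * S.m * S.P / S.delta) :=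
        le_mul_of_one_le_left (by positivity) H.one_le_T
    _ = S.condRatio := by rw [condRatio]; ring

theorem CondH.two_mul_T_le_condRatio (H : S.CondH C) : 2 * S.T ≤ S.condRatio := by
  have hδ := S.hdelta0
  have hNm := one_le_mul_of_one_le_of_one_le (one_le_N (S := S)) (one_le_m (S := S))
  rw [condRatio, le_div_iff₀ hδ]
  calc 2 * S.T * S.delta ≤ 2 * S.T * 1 := by gcongr; exact S.hdelta1.le
    _ = S.T * (1 * 2) := by ring
    _ ≤ S.T * (S.N * S.m * S.P) := by gcongr; exact H.two_le_P
    _ = S.T * S.N * S.m * S.P := by ring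

theorem CondH.two_le_condRatio (H : S.CondH C) : 2 ≤ S.condRatio := by
  linarith [H.one_le_T, H.two_mul_T_le_condRatio]

theorem CondH.half_le_log (H : S.CondH C) : 1 / 2 ≤ Real.log S.condRatio := by
  linarith [Real.log_le_log (zero_lt_two' ℝ) H.two_le_condRatio, Real.log_two_gt_d9]

theorem CondH.noiseLog_le (H : S.CondH C) : S.noiseLog ≤ 5 * Real.log S.condRatio := by
  have hN := one_le_N (S := S)
  have hm := one_le_m (S := S)
  have hP := one_le_P (S := S)
  have hδ := S.hdelta0
  refine log_le_mul_log_of_le_pow (k := 5) (by positivity) ?_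
  calc 16 * S.N * S.m * S.P / S.delta = 2 ^ 4 * (S.N * S.m * S.P / S.delta) := by ring
    _ ≤ S.condRatio ^ 4 * S.condRatio := by
        gcongr
        · exact H.two_le_condRatio
        · exact H.div_le_condRatio
    _ = S.condRatio ^ 5 := by ring

theorem CondH.log_width_le (H : S.CondH C) :
    Real.log (16 * S.m / S.delta) ≤ 5 * Real.log S.condRatio := by
  have hm := one_le_m (S := S)
  have hδ := S.hdelta0
  have hNP := one_le_mul_of_one_le_of_one_le (one_le_N (S := S)) (one_le_P (S := S))
  refine (Real.log_le_log (by positivity) (div_le_div_of_nonneg_right ?_ hδ.le)).trans H.noiseLog_le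
  calc (16 * S.m : ℝ) ≤ 16 * S.m * (S.N * S.P) := le_mul_of_one_le_right (by positivity) hNP
    _ = 16 * S.N * S.m * S.P := by ring

theorem CondH.log_pairs_le (H : S.CondH C) :
    Real.log (16 * S.N ^ 2 * S.P ^ 2 / S.delta) ≤ 6 * Real.log S.condRatio := by
  have hN := one_le_N (S := S)
  have hm := one_le_m (S := S)
  have hP := one_le_P (S := S)
  have hδ := S.hdelta0
  refine log_le_mul_log_of_le_pow (k := 6) (by positivity) ?_
  calc 16 * S.N ^ 2 * S.P ^ 2 / S.delta = 2 ^ 4 * ((S.N * 1 * S.P) ^ 2 / S.delta) := by ring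
    _ ≤ 2 ^ 4 * ((S.N * S.m * S.P) ^ 2 / S.delta ^ 2) := by
        gcongr
        exact pow_le_of_le_one hδ.le S.hdelta1.le two_ne_zero
    _ = 2 ^ 4 * (S.N * S.m * S.P / S.delta) ^ 2 := by rw [div_pow]
    _ ≤ S.condRatio ^ 4 * S.condRatio ^ 2 := by
        gcongr
        · exact H.two_le_condRatio
        · exact H.div_le_condRatio
    _ = S.condRatio ^ 6 := by ring

theorem CondH.log_horizon_le (H : S.CondH C) :
    Real.log (3 + S.T) ≤ 2 * Real.log S.condRatio := by
  refine log_le_mul_log_of_le_pow (k := 2) (by positivity) ?_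
  have hT := H.one_le_T
  have hsq : (2 * S.T : ℝ) ^ 2 ≤ S.condRatio ^ 2 := by
    gcongr
    exact H.two_mul_T_le_condRatio
  nlinarith

theorem CondH.log_condRatio_le (H : S.CondH C) :
    Real.log S.condRatio ≤ Real.log (S.T * S.d * S.N * S.m * S.P / S.delta) := by
  have hY := H.two_le_condRatio
  refine Real.log_le_log (by linarith) ?_
  calc S.condRatio ≤ S.condRatio * S.d := le_mul_of_one_le_right (by linarith) one_le_d
    _ = S.T * S.d * S.N * S.m * S.P / S.delta := by rw [condRatio]; ring

theorem CondH.inv_le (H : S.CondH C) (hC : 1500 ≤ C) : 0 ≤ C⁻¹ ∧ C⁻¹ ≤ 1 / 1500 := by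
  rw [one_div]
  exact ⟨inv_nonneg.2 (zero_le_one.trans H.1), inv_anti₀ (by norm_num) hC⟩

theorem CondH.eps_le (H : S.CondH C) (hC : 1500 ≤ C) : 2 * S.eps ≤ S.alpha := by
  obtain ⟨hC0, hC1⟩ := H.inv_le hC
  obtain ⟨-, -, -, -, -, -, -, hε, -⟩ := H
  have hα := S.halpha
  have hεα : S.eps ≤ 1 / 1500 * S.alpha :=
    hε.le.trans <| (mul_le_mul_of_nonneg_left (min_le_left _ _) hC0).trans
      (mul_le_mul_of_nonneg_right hC1 hα.le)
  linarith

theorem CondH.eta_le (H : S.CondH C) (hC : 1500 ≤ C) :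
    12 * Real.exp 3 * (S.eta * S.alpha ^ 2) ≤ 1 := by
  obtain ⟨hC0, hC1⟩ := H.inv_le hC
  have hlog := H.half_le_log
  obtain ⟨-, -, -, -, -, hη, -⟩ := H
  have hα := S.halpha
  have hη0 := S.heta
  have hηα : S.eta * S.alpha ^ 2 * Real.log S.condRatio ≤ C⁻¹ :=
    mul_mul_le_of_le_mul_div hC0 (by positivity) (by linarith) (min_le_right _ _) hη
  have hηα' : S.eta * S.alpha ^ 2 * (1 / 2) ≤ 1 / 1500 := by
    refine le_trans ?_ (hηα.trans hC1)
    gcongr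
  have hexp : Real.exp 3 ≤ 55 := (Real.exp_le_exp.2 (by norm_num)).trans exp_four_le
  calc 12 * Real.exp 3 * (S.eta * S.alpha ^ 2) ≤ 12 * 55 * (2 / 1500) := by
        gcongr
        linarith
    _ ≤ 1 := by norm_num

theorem CondH.sigma0_mul_le (H : S.CondH C) (hC : 1500 ≤ C) {b : ℝ} (hb : 0 < b)
    (h : min (1 / ((S.m : ℝ) ^ ((2 : ℝ) / 3) * (S.P : ℝ) ^ ((2 : ℝ) / 3) *
        S.sigman * Real.sqrt S.d)) (1 / (S.alpha * (S.m : ℝ) ^ ((2 : ℝ) / 3))) ≤ 1 / b) :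
    S.sigma0 * b * Real.log S.condRatio ≤ 1 / 1500 := by
  obtain ⟨hC0, hC1⟩ := H.inv_le hC
  have hlog := H.half_le_log
  have hlogd := H.log_condRatio_le
  obtain ⟨-, -, -, -, hσ, -⟩ := H
  have hσ0 := S.hsigma0
  calc S.sigma0 * b * Real.log S.condRatio
      ≤ S.sigma0 * b * Real.log (S.T * S.d * S.N * S.m * S.P / S.delta) := by gcongr
    _ ≤ C⁻¹ :=
        mul_mul_le_of_le_mul_div hC0 hb (by linarith) ((min_le_left _ _).trans h) hσ
    _ ≤ 1 / 1500 := hC1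

theorem CondH.init_signal_le (H : S.CondH C) (hC : 1500 ≤ C) :
    S.m * (S.alpha * (S.sigma0 * Real.sqrt (2 * Real.log (16 * S.m / S.delta)))) ^ 3 ≤ 1 := by
  have hm := one_le_m (S := S)
  have hα := S.halpha
  have hσ0 := S.hsigma0
  have hlog := H.half_le_log
  have hσ := H.sigma0_mul_le hC (by positivity) (min_le_right _ _)
  have hsqrt : Real.sqrt (2 * Real.log (16 * S.m / S.delta)) ≤ 20 * Real.log S.condRatio :=
    sqrt_le_of_le_of_one_le (by linarith [H.log_width_le]) (by linarith)
  set Λ := Real.log S.condRatio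
  calc S.m * (S.alpha * (S.sigma0 * Real.sqrt (2 * Real.log (16 * S.m / S.delta)))) ^ 3
      ≤ S.m ^ 2 * (S.alpha * (S.sigma0 * (20 * Λ))) ^ 3 := by
        gcongr
        exact le_self_pow₀ hm two_ne_zero
    _ = (20 * (S.sigma0 * (S.alpha * (S.m : ℝ) ^ ((2 : ℝ) / 3)) * Λ)) ^ 3 := by
        rw [← Real.rpow_two, ← rpow_div_three_pow_three (Nat.cast_nonneg _)]; ring
    _ ≤ 1 := pow_le_one₀ (by positivity) (by linarith)

theorem CondH.init_noise_le (H : S.CondH C) (hC : 1500 ≤ C) :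
    S.m * (S.P * S.noiseScale ^ 3) ≤ 1 := by
  have hm := one_le_m (S := S)
  have hP := one_le_P (S := S)
  have hd := one_le_d (S := S)
  have hσ0 := S.hsigma0
  have hσn := S.hsigman
  have hlog := H.half_le_log
  have hσ := H.sigma0_mul_le hC (by positivity) (min_le_left _ _)
  have hsqrt : Real.sqrt S.noiseLog ≤ 10 * Real.log S.condRatio :=
    sqrt_le_of_le_of_one_le (by linarith [H.noiseLog_le]) (by linarith)
  rw [noiseScale, Real.sqrt_mul (Nat.cast_nonneg _)]
  set Λ := Real.log S.condRatio
  calc S.m * (S.P * (3 * S.sigma0 * S.sigman * (Real.sqrt S.d * Real.sqrt S.noiseLog)) ^ 3)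
      ≤ S.m ^ 2 * (S.P ^ 2 * (3 * S.sigma0 * S.sigman * (Real.sqrt S.d * (10 * Λ))) ^ 3) := by
        gcongr
        · exact le_self_pow₀ hm two_ne_zero
        · exact le_self_pow₀ hP two_ne_zero
    _ = (30 * (S.sigma0 * ((S.m : ℝ) ^ ((2 : ℝ) / 3) * (S.P : ℝ) ^ ((2 : ℝ) / 3) *
          S.sigman * Real.sqrt S.d) * Λ)) ^ 3 := by
        simp only [← Real.rpow_two]
        rw [← rpow_div_three_pow_three (Nat.cast_nonneg S.m),
          ← rpow_div_three_pow_three (Nat.cast_nonneg S.P)]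
        ring
    _ ≤ 1 := pow_le_one₀ (by positivity) (by linarith)

theorem CondH.sq_mul_log_sq_le (H : S.CondH C) (hC : 1500 ≤ C) :
    192 * (S.N * S.P * Real.log S.condRatio) ^ 2 ≤ S.d := by
  have hlog := H.half_le_log
  obtain ⟨-, -, hdim, -⟩ := H
  change C * S.m ^ 2 * S.P ^ 2 * S.N ^ 2 * Real.log S.condRatio ^ 4 ≤ S.d at hdim
  set Λ := Real.log S.condRatio
  have hm2 : (1 : ℝ) ≤ S.m ^ 2 := one_le_pow₀ one_le_m
  calc 192 * (S.N * S.P * Λ) ^ 2 = 768 * 1 * S.P ^ 2 * S.N ^ 2 * (Λ ^ 2 * (1 / 2) ^ 2) := by ring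
    _ ≤ C * S.m ^ 2 * S.P ^ 2 * S.N ^ 2 * (Λ ^ 2 * Λ ^ 2) := by
        gcongr
        linarith
    _ = C * S.m ^ 2 * S.P ^ 2 * S.N ^ 2 * Λ ^ 4 := by ring
    _ ≤ S.d := hdim

theorem CondH.spread_le (H : S.CondH C) (hC : 1500 ≤ C) :
    12 * S.eps * S.m * (S.N * S.sigma0) * Real.log (3 + S.T) ^ 2 ≤ 1 := by
  have hC1 := (H.inv_le hC).2
  have hN := one_le_N (S := S)
  have hm := one_le_m (S := S)
  have hd := one_le_d (S := S)
  have hσ0 := S.hsigma0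
  have hε := S.heps
  have hlogT : 0 ≤ Real.log (3 + S.T) := Real.log_nonneg (by linarith [H.one_le_T])
  have hdim : 48 * (S.N * Real.log S.condRatio ^ 2) ≤ S.d := by
    refine le_trans ?_ (H.sq_mul_log_sq_le hC)
    calc 48 * (S.N * Real.log S.condRatio ^ 2)
        ≤ 192 * (S.N ^ 2 * S.P ^ 2 * Real.log S.condRatio ^ 2) := by
          gcongr
          · norm_num
          · exact (le_self_pow₀ hN two_ne_zero).trans
              (le_mul_of_one_le_right (by positivity) (one_le_pow₀ one_le_P))
      _ = 192 * (S.N * S.P * Real.log S.condRatio) ^ 2 := by ring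
  have hbudget : S.eps * (S.m * S.sigma0 * S.d) ≤ 1 := by
    obtain ⟨-, -, -, -, -, -, -, hε, -⟩ := H
    have hεd : S.eps ≤ C⁻¹ * (1 / (S.m * S.sigma0 * S.d)) := by
      refine hε.le.trans ?_
      gcongr
      exact min_le_right _ _
    rw [mul_one_div, le_div_iff₀ (by positivity)] at hεd
    exact hεd.trans (hC1.trans (by norm_num))
  calc 12 * S.eps * S.m * (S.N * S.sigma0) * Real.log (3 + S.T) ^ 2
      ≤ 12 * S.eps * S.m * (S.N * S.sigma0) * (2 * Real.log S.condRatio) ^ 2 := by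
        gcongr
        exact H.log_horizon_le
    _ = S.eps * (S.m * S.sigma0 * (48 * (S.N * Real.log S.condRatio ^ 2))) := by ring
    _ ≤ S.eps * (S.m * S.sigma0 * S.d) := by gcongr
    _ ≤ 1 := hbudget

theorem CondH.cross_le (H : S.CondH C) (hC : 1500 ≤ C) :
    4 * (S.N * S.P) * Real.sqrt (S.d * Real.log (16 * S.N ^ 2 * S.P ^ 2 / S.delta)) ≤ S.d := by
  have hN := one_le_N (S := S)
  have hP := one_le_P (S := S)
  have hlog := H.half_le_log
  have hdim := H.sq_mul_log_sq_le hC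
  have hpairs := H.log_pairs_le
  set Λ := Real.log S.condRatio
  rw [← le_div_iff₀' (by positivity), Real.sqrt_le_left (by positivity), div_pow,
    le_div_iff₀ (by positivity)]
  calc S.d * Real.log (16 * S.N ^ 2 * S.P ^ 2 / S.delta) * (4 * (S.N * S.P)) ^ 2
      ≤ S.d * (6 * Λ) * (4 * (S.N * S.P)) ^ 2 := by gcongr
    _ = S.d * (192 * (S.N * S.P) ^ 2 * (Λ * (1 / 2))) := by ring
    _ ≤ S.d * (192 * (S.N * S.P) ^ 2 * (Λ * Λ)) := by gcongr
    _ = S.d * (192 * (S.N * S.P * Λ) ^ 2) := by ring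
    _ ≤ S.d * S.d := by gcongr
    _ = S.d ^ 2 := by ring

theorem CondH.signal_ge (H : S.CondH C) (hC : 1500 ≤ C) (hpun : S.pun = 0) :
    4000 * Real.sqrt S.noiseLog * (S.sigman * Real.sqrt S.d) ^ 3 ≤
      S.N * (S.alpha - S.eps) ^ 3 := by
  have hσn := S.hsigman
  have hε := H.eps_le hC
  have hN := one_le_N (S := S)
  have hlog := H.half_le_log
  have hΛ3 : (1 / 2) ^ 2 * Real.log S.condRatio ≤ Real.log S.condRatio ^ 3 := by
    rw [pow_succ (Real.log S.condRatio)]; gcongr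
  have hsqrt : Real.sqrt S.noiseLog ≤ 40 * Real.log S.condRatio ^ 3 :=
    sqrt_le_of_le_of_one_le (by linarith [H.noiseLog_le]) (by linarith)
  obtain ⟨-, -, -, hsig, -⟩ := H
  rw [hpun, sub_zero, mul_one, div_le_iff₀ (by positivity)] at hsig
  change C * S.sigman * Real.sqrt S.d * Real.log S.condRatio ≤ _ at hsig
  set Λ := Real.log S.condRatio
  set b := Real.sqrt S.d
  calc 4000 * Real.sqrt S.noiseLog * (S.sigman * b) ^ 3
      ≤ 4000 * (40 * Λ ^ 3) * (S.sigman * b) ^ 3 := by gcongr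
    _ ≤ (750 * S.sigman * b * Λ) ^ 3 := by
        have : 0 ≤ Λ ^ 3 * (S.sigman * b) ^ 3 := by positivity
        linarith
    _ ≤ (C / 2 * S.sigman * b * Λ) ^ 3 := by
        gcongr
        linarith
    _ ≤ ((S.alpha - S.eps) * (S.N : ℝ) ^ ((1 : ℝ) / 3)) ^ 3 := by
        refine pow_le_pow_left₀ (by positivity) ?_ 3
        calc C / 2 * S.sigman * b * Λ = C * S.sigman * b * Λ / 2 := by ring
          _ ≤ S.alpha * (S.N : ℝ) ^ ((1 : ℝ) / 3) / 2 := by gcongr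
          _ = S.alpha / 2 * (S.N : ℝ) ^ ((1 : ℝ) / 3) := by ring
          _ ≤ (S.alpha - S.eps) * (S.N : ℝ) ^ ((1 : ℝ) / 3) := by gcongr; linarith
    _ = S.N * (S.alpha - S.eps) ^ 3 := by
        rw [mul_pow, rpow_div_three_pow_three (Nat.cast_nonneg _), Real.rpow_one, mul_comm]

theorem CondH.parameterBounds (H : S.CondH C) (hC : 1500 ≤ C) (hpun : S.pun = 0) :
    S.ParameterBounds where
  eps_le := H.eps_le hC
  eta_le := H.eta_le hC
  init_signal_le := H.init_signal_le hC
  init_noise_le := H.init_noise_le hC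
  spread_le := H.spread_le hC
  cross_le := H.cross_le hC
  signal_ge := H.signal_ge hC hpun

end Condition

end Setting

theorem stmt10_general {S : Setting} {C0 : ℝ} (hC0 : 2 ≤ C0) (hdyn : S.ATDyn)
    (E : S.ConcentrationBounds) (B : S.ParameterBounds) (hU : S.SU = ∅) {t : ℕ} (ht : t ≤ S.T) :
    (∀ (r : Fin S.m) (i : Fin S.N) (j : Fin S.P), j ≠ S.sig i →
      S.rho i j r t ≤
        200 * Real.exp (2 * C0 ^ 3) * Real.log ((16 : ℝ) * S.N * S.m * S.P / S.delta) *
          (S.sigma0 * S.sigman ^ 2 * S.d) / ((S.N : ℝ) * (S.alpha - S.eps) ^ 3)) ∧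
    (∀ (r : Fin S.m) (i : Fin S.N) (j : Fin S.P), j ≠ S.sig i →
      |dot (S.w t r) (S.x i j)| ≤
        3 * S.sigma0 * S.sigman *
          Real.sqrt ((S.d : ℝ) * Real.log ((16 : ℝ) * S.N * S.m * S.P / S.delta))) := by
  have hnoise {τ : ℕ} (hτ : τ ≤ S.T) := Setting.forall_abs_dot_w_le_noiseScale hdyn E B hU hτ
  refine ⟨fun r i j hj => ?_, hnoise ht⟩
  have hρ := Setting.rho_le_rhoScale hdyn E B hU ht (fun τ hτ => hnoise (hτ.le.trans ht)) r i hj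
  have hexp : 10 ≤ Real.exp (2 * C0 ^ 3) := by
    have hcube : (2 : ℝ) ^ 3 ≤ C0 ^ 3 := by gcongr
    linarith [Real.add_one_le_exp (2 * C0 ^ 3)]
  calc S.rho i j r t ≤ 200 * 10 * S.rhoScale := by linarith
    _ ≤ 200 * Real.exp (2 * C0 ^ 3) * S.rhoScale := by
        have := Setting.rhoScale_nonneg (S := S)
        gcongr
    _ = _ := by rw [Setting.rhoScale, Setting.noiseLog]; ring

/-- Noise stability without unlearnable samples. On the event `E`,
in the learnable-only regime `p_un = 0` (`S_U = ∅`) and under Condition (H), for every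
`t ≤ T` the noise coefficients are bounded as stated and every noise response remains
at the initialization scale. -/
theorem stmt10 :
    ∃ C0 C : ℝ, 0 < C0 ∧ 0 < C ∧
      ∀ S : Setting, S.ATDyn → S.EventE → S.CondH C → S.SU = ∅ →
        ∀ t, t ≤ S.T →
          (∀ (r : Fin S.m) (i : Fin S.N) (j : Fin S.P), j ≠ S.sig i →
            S.rho i j r t ≤
              200 * Real.exp (2 * C0 ^ 3) * Real.log ((16 : ℝ) * S.N * S.m * S.P / S.delta) *
                (S.sigma0 * S.sigman ^ 2 * S.d) / ((S.N : ℝ) * (S.alpha - S.eps) ^ 3)) ∧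
          (∀ (r : Fin S.m) (i : Fin S.N) (j : Fin S.P), j ≠ S.sig i →
            |dot (S.w t r) (S.x i j)| ≤
              3 * S.sigma0 * S.sigman *
                Real.sqrt ((S.d : ℝ) * Real.log ((16 : ℝ) * S.N * S.m * S.P / S.delta))) :=
  ⟨2, 1500, by norm_num, by norm_num, fun S hdyn hE H hU _t ht =>
    stmt10_general le_rfl hdyn hE.concentrationBounds
      (H.parameterBounds le_rfl (by simp [Setting.pun, hU])) hU ht⟩

end AD

end
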